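/- arXiv:1712.05539 — 2 statements merged into one kernel-verified Lean document; each statement's English description precedes it below -/
import Mathlib

section
/- Let d ≥ 4 and let a set of 3(⌈d/2⌉+1) + 2(⌊d/2⌋-1) points in general position in ℝ^d (every d+1 of them affinely independent) be partitioned into d parts, where each of the first ⌈d/2⌉+1 parts has 3 points and each of the remaining ⌊d/2⌋-1 parts has 2 points. Then the number of unordered pairs {U', W'} of disjoint d-element subsets, each containing exactly one point from every part, such that the convex hulls of U' and W' contain a common point in their relative (intrinsic) interiors, is at least 2^(⌊d/2⌋-1). Equivalently, every d-dimensional rectilinear drawing of K_{(⌈d/2⌉+1)×3+(⌊d/2⌋-1)×2}^d contains at least 2^(⌊d/2⌋-1) crossing pairs of hyperedges. -/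
/-!
Let the `a` colour classes of size three satisfy `d + 2 ≤ 2 * a`. Lifting the points `y` to
`(y, 1)`, the linear dependences among the `3 * a` points of these classes form a space of dimension
more than `a`. The crucial claim is that such a space contains a nonzero dependence whose three
coefficients in every class have median zero: it has at most one positive and one negative
coefficient per class, so it exhibits a common point of the hulls of two disjoint rainbow sets.

For the claim, perturb the space to one of dimension `a + 1`, cut by the coordinate hyperplanes (and
one auxiliary hyperplane, which orients it) in a uniform arrangement. The two-dimensional cells
of such an arrangement have an even number of facets, which yields Stokes' theorem mod 2 for chains
of sign vectors. The sign patterns of a triple with median zero and those with zero middle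
entry are homologous, through the alternating patterns `(ε, -ε, ε)`; so the number of median-zero
cells has the parity of the number of cells with zero middle entries, and there is exactly one of
the latter.

In general position a common point of the two hulls yields a dependence with strictly positive
weights, hence a common point of the relative interiors, once every class contributes a point to
either side. Swapping the two sides in each of the remaining classes preserves the common point of
the two original hulls and gives `2 ^ k` pairs, where `k` is the number of these classes.
-/

open Finset Module Function

theorem exists_ne_zero_map_eq_zero {E F : Type*} [AddCommGroup E] [Module ℝ E] [AddCommGroup F]
    [Module ℝ F] [FiniteDimensional ℝ F] (f : E →ₗ[ℝ] F) (h : finrank ℝ F < finrank ℝ E) :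
    ∃ x ≠ 0, f x = 0 := by
  have := Module.finite_of_finrank_pos (pos_of_gt h)
  obtain ⟨x, hx, hx0⟩ := (Submodule.ne_bot_iff _).1 (LinearMap.ker_ne_bot_of_finrank_lt h)
  exact ⟨x, hx0, hx⟩

section Cones

variable {L J : Type*} [AddCommGroup L] [Module ℝ L]

/-- The coordinate `j` is a facet of the cone `{x | 0 ≤ ψ x}`: on some point of the cone the
`j`-th inequality is the only tight one. -/
def IsFacet (ψ : L →ₗ[ℝ] J → ℝ) (j : J) : Prop :=
  ∃ x, ψ x j = 0 ∧ ∀ i ≠ j, 0 < ψ x i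

theorem card_isFacet_le_two [Fintype J] {ψ : L →ₗ[ℝ] J → ℝ} [DecidablePred (IsFacet ψ)]
    (hψ : ∀ x i j, i ≠ j → ψ x i = 0 → ψ x j = 0 → x = 0) : #{j | IsFacet ψ j} ≤ 2 := by
  classical
  by_contra! hcard
  obtain ⟨i, j, k, hi, hj, hk, hij, hik, hjk⟩ := two_lt_card_iff.1 hcard
  obtain ⟨x, hxi, hx⟩ := (mem_filter_univ i).1 hi
  obtain ⟨y, hyj, hy⟩ := (mem_filter_univ j).1 hj
  obtain ⟨z, hzk, hz⟩ := (mem_filter_univ k).1 hk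
  have hxj := hx j hij.symm
  have hyi := hy i hij
  have hcomb : z - (ψ z j / ψ x j) • x - (ψ z i / ψ y i) • y = 0 := by
    refine hψ _ i j hij ?_ ?_ <;> simp [hxi, hyj, hxj.ne', hyi.ne']
  have hzero : 0 - ψ z j / ψ x j * ψ x k - ψ z i / ψ y i * ψ y k = 0 := by
    simpa [hzk] using congr_fun (congr_arg ψ hcomb) k
  have := mul_pos (div_pos (hz j hjk) hxj) (hx k hik.symm)
  have := mul_pos (div_pos (hz i hik) hyi) (hy k hjk.symm)
  linarith

theorem IsFacet.exists_ne_isFacet [Finite J] [Nontrivial J] {ψ : L →ₗ[ℝ] J → ℝ}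
    (hL : 1 < finrank ℝ L) (hψ : ∀ x i j, i ≠ j → ψ x i = 0 → ψ x j = 0 → x = 0) {j : J}
    (hj : IsFacet ψ j) : ∃ k ≠ j, IsFacet ψ k := by
  classical
  have := Fintype.ofFinite J
  obtain ⟨x, hxj, hx⟩ := hj
  obtain ⟨k₀, hk₀⟩ := exists_ne j
  obtain ⟨u, huj⟩ : ∃ u, 0 < ψ u j := by
    obtain ⟨u, hu0, hu⟩ := exists_ne_zero_map_eq_zero (LinearMap.proj k₀ ∘ₗ ψ) (by simpa using hL)
    have huj : ψ u j ≠ 0 := fun h => hu0 (hψ u k₀ j hk₀ hu h)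
    rcases huj.lt_or_gt with h | h
    exacts [⟨-u, by simpa using h⟩, ⟨u, h⟩]
  obtain ⟨k, hk, hmin⟩ := (univ.erase j).exists_min_image (fun i => ψ u i / ψ x i)
    ⟨k₀, by simpa using hk₀⟩
  have hkj : k ≠ j := ne_of_mem_erase hk
  set w := u - (ψ u k / ψ x k) • x with hw
  have hwk : ψ w k = 0 := by simp [hw, (hx k hkj).ne']
  have hwj : 0 < ψ w j := by simpa [hw, hxj]
  refine ⟨k, hkj, w, hwk, fun i hi => ?_⟩
  obtain rfl | hij := eq_or_ne i j
  · exact hwj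
  have hnonneg : 0 ≤ ψ w i := by
    simpa [hw] using (le_div_iff₀ (hx i hij)).1 (hmin i (by simpa using hij))
  refine hnonneg.lt_of_ne' fun h => hwj.ne' ?_
  simp [hψ w i k hi h hwk]

theorem even_card_isFacet [Fintype J] [Nontrivial J] {ψ : L →ₗ[ℝ] J → ℝ}
    [DecidablePred (IsFacet ψ)] (hL : 1 < finrank ℝ L)
    (hψ : ∀ x i j, i ≠ j → ψ x i = 0 → ψ x j = 0 → x = 0) : Even #{j | IsFacet ψ j} := by
  have hle := card_isFacet_le_two hψ
  have hne : #{j | IsFacet ψ j} ≠ 1 := fun h => by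
    obtain ⟨j, hj⟩ := card_eq_one.1 h
    have hmem : ∀ k, IsFacet ψ k ↔ k = j := by simpa [Finset.ext_iff] using hj
    obtain ⟨k, hkj, hk⟩ := ((hmem j).2 rfl).exists_ne_isFacet hL hψ
    exact hkj ((hmem k).1 hk)
  interval_cases #{j | IsFacet ψ j} <;> simp_all

end Cones

section Covectors

variable {E J : Type*} [AddCommGroup E] [Module ℝ E]

/-- The covectors (cells) of the arrangement of the hyperplanes `φ · j = 0`: the sign vectors
attained by the coordinates of `φ`. -/
def covectors (φ : E →ₗ[ℝ] J → ℝ) : Set (J → SignType) :=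
  Set.range fun x j => SignType.sign (φ x j)

theorem neg_mem_covectors {φ : E →ₗ[ℝ] J → ℝ} {t : J → SignType} (ht : t ∈ covectors φ) :
    -t ∈ covectors φ := by
  obtain ⟨x, rfl⟩ := ht
  exact ⟨-x, by ext1 j; simp [Left.sign_neg]⟩

/-- The linear span of the face `s`: the intersection of the hyperplanes on which `s` vanishes. -/
def flat (φ : E →ₗ[ℝ] J → ℝ) (s : J → SignType) : Submodule ℝ E :=
  LinearMap.ker (LinearMap.funLeft ℝ ℝ ((↑) : {j // s j = 0} → J) ∘ₗ φ)

theorem mem_flat {φ : E →ₗ[ℝ] J → ℝ} {s : J → SignType} {x : E} :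
    x ∈ flat φ s ↔ ∀ j, s j = 0 → φ x j = 0 := by
  simp [flat, funext_iff]

/-- The coordinates of `φ` transverse to `flat φ s`, signed so that the face `s` is the interior of
the cone `{x | 0 ≤ faceMap φ s x}`. -/
def faceMap (φ : E →ₗ[ℝ] J → ℝ) (s : J → SignType) : flat φ s →ₗ[ℝ] {j // s j ≠ 0} → ℝ :=
  LinearMap.pi fun j => (s j : ℝ) • LinearMap.proj j.1 ∘ₗ φ ∘ₗ (flat φ s).subtype

theorem faceMap_apply_eq_zero_iff {φ : E →ₗ[ℝ] J → ℝ} {s : J → SignType} {x : flat φ s}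
    {j : {j // s j ≠ 0}} : faceMap φ s x j = 0 ↔ φ x j = 0 := by
  obtain ⟨j, hj⟩ := j
  rcases h : s j with _ | _ | _ <;> simp_all [faceMap]

theorem faceMap_apply_pos_iff {φ : E →ₗ[ℝ] J → ℝ} {s : J → SignType} {x : flat φ s}
    {j : {j // s j ≠ 0}} : 0 < faceMap φ s x j ↔ SignType.sign (φ x j) = s j := by
  obtain ⟨j, hj⟩ := j
  rcases h : s j with _ | _ | _ <;> simp_all [faceMap, sign_eq_one_iff, sign_eq_neg_one_iff]

theorem isFacet_faceMap_iff [DecidableEq J] {φ : E →ₗ[ℝ] J → ℝ} {s : J → SignType}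
    {j : {j // s j ≠ 0}} :
    IsFacet (faceMap φ s) j ↔ update s j 0 ∈ covectors φ := by
  have hcell : ∀ x, (fun k => SignType.sign (φ x k)) = update s j 0 ↔
      φ x j = 0 ∧ ∀ k ≠ j.1, SignType.sign (φ x k) = s k := fun x => by
    simp only [eq_update_iff, sign_eq_zero_iff, ne_eq]
  constructor
  · rintro ⟨x, hxj, hx⟩
    refine ⟨x, (hcell x).2 ⟨faceMap_apply_eq_zero_iff.1 hxj, fun k hk => ?_⟩⟩
    by_cases hsk : s k = 0
    · rw [hsk, mem_flat.1 x.2 k hsk, sign_zero]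
    · exact faceMap_apply_pos_iff.1 (hx ⟨k, hsk⟩ (by simpa [Subtype.ext_iff] using hk))
  · rintro ⟨x, hx⟩
    obtain ⟨hxj, hx⟩ := (hcell x).1 hx
    refine ⟨⟨x, mem_flat.2 fun k hk => ?_⟩, faceMap_apply_eq_zero_iff.2 hxj, fun k hk => ?_⟩
    · exact sign_eq_zero_iff.1 ((hx k fun h => j.2 (h ▸ hk)).trans hk)
    · exact faceMap_apply_pos_iff.2 (hx k (by simpa [Subtype.ext_iff] using hk))

variable [Fintype J]

theorem finrank_le_card_add_finrank_flat [FiniteDimensional ℝ E] (φ : E →ₗ[ℝ] J → ℝ)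
    (s : J → SignType) : finrank ℝ E ≤ #{j | s j = 0} + finrank ℝ (flat φ s) := by
  let f := LinearMap.funLeft ℝ ℝ ((↑) : {j // s j = 0} → J) ∘ₗ φ
  calc finrank ℝ E = finrank ℝ (LinearMap.range f) + finrank ℝ (flat φ s) :=
        f.finrank_range_add_finrank_ker.symm
    _ ≤ _ := by
        gcongr
        simpa [Fintype.card_subtype] using (LinearMap.range f).finrank_le

/-- The hyperplanes `φ · j = 0` are in general position: fewer than `finrank ℝ E` of them pass
through any nonzero point. -/
def IsUniform (φ : E →ₗ[ℝ] J → ℝ) : Prop :=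
  ∀ x ≠ 0, #{j | φ x j = 0} < finrank ℝ E

theorem IsUniform.eq_zero_of_faceMap {φ : E →ₗ[ℝ] J → ℝ} (hφ : IsUniform φ) {s : J → SignType}
    (hs : #{j | s j = 0} + 2 = finrank ℝ E) (x : flat φ s) (i j : {j // s j ≠ 0}) (hij : i ≠ j)
    (hi : faceMap φ s x i = 0) (hj : faceMap φ s x j = 0) : x = 0 := by
  rw [faceMap_apply_eq_zero_iff] at hi hj
  by_contra hx
  refine (hφ x (by simpa using hx)).not_ge ?_
  have hjs : j.1 ∉ ({k | s k = 0} : Finset J) := by simpa using j.2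
  have hijs : i.1 ∉ cons j.1 {k | s k = 0} hjs := by
    simpa [Subtype.ext_iff] using ⟨Subtype.coe_ne_coe.2 hij, i.2⟩
  calc finrank ℝ E = #(cons i.1 (cons j.1 {k | s k = 0} hjs) hijs) := by
        rw [card_cons, card_cons, ← hs]
    _ ≤ #{k | φ x k = 0} := card_le_card fun k hk => by
        simp only [mem_cons, mem_filter_univ] at hk ⊢
        rcases hk with rfl | rfl | hk
        exacts [hi, hj, mem_flat.1 x.2 k hk]

variable [DecidableEq J]

/-- The mod 2 boundary of a chain of sign vectors: the coefficient of `t` is the sum of the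
coefficients of the sign vectors having `t` as a face of codimension one. -/
def signBoundary (c : (J → SignType) → ZMod 2) (t : J → SignType) : ZMod 2 :=
  ∑ j with t j = 0, (c (update t j 1) + c (update t j (-1)))

theorem sum_filter_apply_eq_zero_update {R : Type*} [AddCommMonoid R]
    (p : (J → SignType) → Prop) [DecidablePred p] (c : (J → SignType) → R) (j : J) (ε : SignType) :
    ∑ t with p t ∧ t j = 0, c (update t j ε) = ∑ s with p (update s j 0) ∧ s j = ε, c s := by
  refine sum_bij' (fun t _ => update t j ε) (fun s _ => update s j 0) ?_ ?_ ?_ ?_ ?_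
  · simp only [mem_filter_univ, update_self, update_idem, and_true]
    rintro t ⟨ht, h⟩
    rwa [← h, update_eq_self]
  · simp +contextual
  · simp only [mem_filter_univ, update_idem]
    rintro t ⟨-, h⟩
    rw [← h, update_eq_self]
  · simp only [mem_filter_univ, update_idem]
    rintro s ⟨-, h⟩
    rw [← h, update_eq_self]
  · simp

theorem sum_filter_signBoundary (p : (J → SignType) → Prop) [DecidablePred p]
    (c : (J → SignType) → ZMod 2) :
    ∑ t with p t, signBoundary c t = ∑ s, #{j | p (update s j 0) ∧ s j ≠ 0} * c s := by
  have hsplit : ∀ j, ∑ s with p (update s j 0) ∧ s j ≠ 0, c s =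
      ∑ s with p (update s j 0) ∧ s j = 1, c s +
        ∑ s with p (update s j 0) ∧ s j = -1, c s := fun j => by
    simp only [sum_filter, ← sum_add_distrib]
    refine sum_congr rfl fun s _ => ?_
    rcases s j with _ | _ | _ <;> simp
  calc ∑ t with p t, signBoundary c t
      = ∑ j, ∑ t with p t ∧ t j = 0, (c (update t j 1) + c (update t j (-1))) := by
        simp only [signBoundary, sum_filter, ite_and]
        rw [sum_comm]
        simp only [← ite_sum_zero]
    _ = ∑ j, ∑ s with p (update s j 0) ∧ s j ≠ 0, c s := by
        simp only [sum_add_distrib, sum_filter_apply_eq_zero_update, hsplit]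
    _ = ∑ s, #{j | p (update s j 0) ∧ s j ≠ 0} * c s := by
        simp only [sum_filter, card_eq_sum_ones, Nat.cast_sum, sum_mul]
        rw [sum_comm]
        simp only [Nat.cast_ite, ite_mul, Nat.cast_one, one_mul, Nat.cast_zero, zero_mul]

theorem IsUniform.even_card_update_mem_covectors {φ : E →ₗ[ℝ] J → ℝ}
    [DecidablePred (· ∈ covectors φ)] (hφ : IsUniform φ) (hE : finrank ℝ E ≤ Fintype.card J)
    {s : J → SignType} (hs : #{j | s j = 0} + 2 = finrank ℝ E) :
    Even #{j | update s j 0 ∈ covectors φ ∧ s j ≠ 0} := by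
  classical
  have := Module.finite_of_finrank_pos (R := ℝ) (M := E) (by lia)
  have hker : 1 < finrank ℝ (flat φ s) := by
    have := finrank_le_card_add_finrank_flat φ s
    lia
  have : Nontrivial {j // s j ≠ 0} := by
    rw [← Fintype.one_lt_card_iff_nontrivial, Fintype.card_subtype_compl, Fintype.card_subtype]
    lia
  convert even_card_isFacet hker (hφ.eq_zero_of_faceMap hs) using 1
  rw [← card_map (Embedding.subtype _)]
  congr 1
  ext j
  simp [isFacet_faceMap_iff, and_comm]

theorem IsUniform.sum_signBoundary_covectors {φ : E →ₗ[ℝ] J → ℝ}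
    [DecidablePred (· ∈ covectors φ)] (hφ : IsUniform φ) (hE : finrank ℝ E ≤ Fintype.card J)
    {c : (J → SignType) → ZMod 2} (hc : ∀ s, c s ≠ 0 → #{j | s j = 0} + 2 = finrank ℝ E) :
    ∑ t with t ∈ covectors φ, signBoundary c t = 0 := by
  rw [sum_filter_signBoundary]
  refine sum_eq_zero fun s _ => ?_
  by_cases hs : c s = 0
  · rw [hs, mul_zero]
  · rw [ZMod.natCast_eq_zero_iff_even.2 (hφ.even_card_update_mem_covectors hE (hc s hs)),
      zero_mul]

end Covectors

section Blocks

variable {ι K : Type*}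

/-- A sign vector on `Option (ι × K)` consists of the sign of an auxiliary coordinate `none` and of
`ι` blocks of signs indexed by `K`. -/
def signBlock (t : Option (ι × K) → SignType) (i : ι) (k : K) : SignType :=
  t (some (i, k))

variable [DecidableEq ι] [DecidableEq K]

theorem signBlock_update_none (t : Option (ι × K) → SignType) (ε : SignType) :
    signBlock (update t none ε) = signBlock t := by
  ext1 i; ext1 k
  simp [signBlock]

theorem signBlock_update_some (t : Option (ι × K) → SignType) (i : ι) (k : K) (ε : SignType) :
    signBlock (update t (some (i, k)) ε) =
      update (signBlock t) i (update (signBlock t i) k ε) := by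
  ext1 i'; ext1 k'
  simp only [signBlock, update_apply, Option.some.injEq, Prod.mk.injEq]
  grind [update_apply, signBlock]

variable [Fintype ι] [Fintype K]

/-- The product of the chains `M i` of sign vectors in the blocks and of the point `1` in the
coordinate `none`. -/
def blockChain (M : ι → (K → SignType) → ZMod 2) (t : Option (ι × K) → SignType) : ZMod 2 :=
  if t none = 1 then ∏ i, M i (signBlock t i) else 0

theorem prod_update_apply_update {ι α R : Type*} [Fintype ι] [DecidableEq ι] [CommMonoid R]
    (M : ι → α → R) (b : ι → α) (i : ι) (g : α → R) (y : α) :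
    ∏ i', update M i g i' (update b i y i') = g y * ∏ i' ∈ univ.erase i, M i' (b i') := by
  rw [← mul_prod_erase univ _ (mem_univ i), update_self, update_self]
  congr 1
  refine prod_congr rfl fun i' hi' => ?_
  rw [update_of_ne (ne_of_mem_erase hi'), update_of_ne (ne_of_mem_erase hi')]

theorem signBoundary_blockChain (M : ι → (K → SignType) → ZMod 2)
    (t : Option (ι × K) → SignType) :
    signBoundary (blockChain M) t = (if t none = 0 then ∏ i, M i (signBlock t i) else 0) +
      ∑ i, blockChain (update M i (signBoundary (M i))) t := by
  have hblock : ∀ i, blockChain (update M i (signBoundary (M i))) t = ∑ k,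
      if t (some (i, k)) = 0 then blockChain M (update t (some (i, k)) 1) +
        blockChain M (update t (some (i, k)) (-1)) else 0 := fun i => by
    have hM := prod_update_apply_update M (signBlock t) i (M i)
    have hg := prod_update_apply_update M (signBlock t) i (signBoundary (M i)) (signBlock t i)
    rw [update_eq_self] at hM hg
    by_cases h : t none = 1
    · simp only [blockChain, signBlock_update_some, hM, hg, ne_eq, reduceCtorEq, not_false_eq_true,
        update_of_ne, h, if_true, signBoundary, sum_filter, sum_mul, ite_mul, add_mul, zero_mul]
      rfl
    · simp [blockChain, h]
  simp only [hblock, signBoundary, sum_filter, Fintype.sum_option, Fintype.sum_prod_type]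
  congr 1
  simp [blockChain, signBlock_update_none]

end Blocks

section OddCycles

variable {ι K : Type*} [Fintype ι] [DecidableEq ι]

theorem blockChain_update (M : ι → (K → SignType) → ZMod 2) (i : ι)
    (g : (K → SignType) → ZMod 2) (t : Option (ι × K) → SignType) :
    blockChain (update M i g) t =
      if t none = 1 then g (signBlock t i) * ∏ i' ∈ univ.erase i, M i' (signBlock t i') else 0 := by
  rw [blockChain, ← prod_update_apply_update, update_eq_self]

variable [Fintype K] [DecidableEq K]

/-- A chain of sign vectors that is an antipodally symmetric cycle carried by the sign vectors with
exactly one zero: the combinatorial counterpart of an odd hypersurface without boundary. -/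
structure IsOddCycle (m : (K → SignType) → ZMod 2) : Prop where
  signBoundary_eq_zero : signBoundary m = 0
  map_neg : ∀ p, m (-p) = m p
  card_zeros : ∀ p, m p ≠ 0 → #{k | p k = 0} = 1

variable {E : Type*} [AddCommGroup E] [Module ℝ E] {φ : E →ₗ[ℝ] Option (ι × K) → ℝ}
  {M : ι → (K → SignType) → ZMod 2} {i₀ : ι} {c : (K → SignType) → ZMod 2}

theorem card_zeros_of_blockChain_ne_zero (hM : ∀ i ≠ i₀, IsOddCycle (M i))
    (hc : ∀ p, c p ≠ 0 → #{k | p k = 0} = 0) {t : Option (ι × K) → SignType}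
    (ht : blockChain (update M i₀ c) t ≠ 0) : #{j | t j = 0} + 2 = Fintype.card ι + 1 := by
  simp only [blockChain_update, ite_ne_right_iff, mul_ne_zero_iff, prod_ne_zero_iff] at ht
  obtain ⟨hnone, hi₀, hi⟩ := ht
  have hcard : ∀ i, #{k | t (some (i, k)) = 0} = if i = i₀ then 0 else 1 := fun i => by
    split_ifs with h
    · exact h ▸ hc _ hi₀
    · exact (hM i h).card_zeros _ (hi i (by simpa using h))
  have hcardι : Fintype.card ι - 1 + 1 = Fintype.card ι :=
    Nat.succ_pred_eq_of_pos (Fintype.card_pos_iff.2 ⟨i₀⟩)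
  calc #{j | t j = 0} + 2 = ∑ i, #{k | t (some (i, k)) = 0} + 2 := by
        simp only [card_filter, Fintype.sum_option, Fintype.sum_prod_type, hnone]
        simp
    _ = ∑ i, (if i = i₀ then 0 else 1) + 2 := by simp only [hcard]
    _ = Fintype.card ι + 1 := by
        rw [sum_ite, sum_const_zero, sum_const, filter_ne', card_erase_of_mem (mem_univ _),
          card_univ]
        lia

theorem sum_covectors_eq_zero_of_neg [DecidablePred (· ∈ covectors φ)]
    {f : (Option (ι × K) → SignType) → ZMod 2} (hf : ∀ t, f (-t) = f t) (h0 : f 0 = 0) :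
    ∑ t with t ∈ covectors φ, f t = 0 := by
  refine sum_involution (fun t _ => -t) (fun t _ => ?_) (fun t _ ht h => ht ?_) (fun t ht => ?_)
    (fun t _ => neg_neg t)
  · rw [hf, CharTwo.add_self_eq_zero]
  · convert h0
    ext1 j
    exact SignType.neg_eq_self_iff.1 (congr_fun h j)
  · simpa using neg_mem_covectors (by simpa using ht)

theorem sum_blockChain_update_signBoundary [Nonempty K] [DecidablePred (· ∈ covectors φ)]
    (hφ : IsUniform φ) (hE : finrank ℝ E = Fintype.card ι + 1)
    (hM : ∀ i ≠ i₀, IsOddCycle (M i)) (hc : ∀ p, c p ≠ 0 → #{k | p k = 0} = 0)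
    (hcneg : ∀ p, c (-p) = c p) :
    ∑ t with t ∈ covectors φ, blockChain (update M i₀ (signBoundary c)) t = 0 := by
  have hneg : ∀ i p, update M i₀ c i (-p) = update M i₀ c i p := fun i p => by
    obtain rfl | h := eq_or_ne i i₀
    · simpa using hcneg p
    · simpa [h] using (hM i h).map_neg p
  have hantipodal : ∑ t with t ∈ covectors φ,
      (if t none = 0 then ∏ i, update M i₀ c i (signBlock t i) else 0) = 0 := by
    refine sum_covectors_eq_zero_of_neg (fun t => ?_) ?_
    · have hblock : ∀ i, signBlock (-t) i = -signBlock t i := fun i => rfl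
      simp [hblock, hneg, SignType.neg_eq_zero_iff]
    · have hzero : c (signBlock 0 i₀) = 0 := by
        by_contra h
        simpa [signBlock] using hc _ h
      exact (if_pos rfl).trans (prod_eq_zero (mem_univ i₀) (by rwa [update_self]))
  have hboundary : ∀ i t, blockChain (update (update M i₀ c) i (signBoundary (update M i₀ c i))) t =
      if i = i₀ then blockChain (update M i₀ (signBoundary c)) t else 0 := fun i t => by
    split_ifs with h
    · simp [h]
    · simp [blockChain_update, h, (hM i h).signBoundary_eq_zero]
  have hstokes := hφ.sum_signBoundary_covectors (c := blockChain (update M i₀ c)) ?_ fun t ht => ?_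
  · simpa [signBoundary_blockChain, hboundary, sum_add_distrib, hantipodal] using hstokes
  · have := Nat.le_mul_of_pos_right (Fintype.card ι) (Fintype.card_pos (α := K))
    simpa [hE]
  · rw [hE, card_zeros_of_blockChain_ne_zero hM hc ht]

end OddCycles

section MedianChains

/-- The sign patterns of three reals whose median is zero: the permutations of `(-1, 0, 1)`. -/
def medianChain (p : Fin 3 → SignType) : ZMod 2 :=
  if Surjective p then 1 else 0

/-- The sign patterns of three reals of which only the middle one is zero. -/
def middleChain (p : Fin 3 → SignType) : ZMod 2 :=
  if ∀ k, p k = 0 ↔ k = 1 then 1 else 0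

/-- The sign patterns `(ε, -ε, ε)`. -/
def alternatingChain (p : Fin 3 → SignType) : ZMod 2 :=
  if p 0 ≠ 0 ∧ p 1 = -p 0 ∧ p 2 = p 0 then 1 else 0

theorem isOddCycle_medianChain : IsOddCycle medianChain where
  signBoundary_eq_zero := funext <| by decide
  map_neg := by decide
  card_zeros := by decide

theorem isOddCycle_middleChain : IsOddCycle middleChain where
  signBoundary_eq_zero := funext <| by decide
  map_neg := by decide
  card_zeros := by decide

theorem signBoundary_alternatingChain :
    signBoundary alternatingChain = medianChain + middleChain :=
  funext <| by decide

variable {ι E : Type*} [Fintype ι] [AddCommGroup E] [Module ℝ E]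
  {φ : E →ₗ[ℝ] Option (ι × Fin 3) → ℝ}

theorem sum_blockChain_piecewise [DecidableEq ι] [DecidablePred (· ∈ covectors φ)]
    (hφ : IsUniform φ) (hE : finrank ℝ E = Fintype.card ι + 1) (A : Finset ι) :
    ∑ t with t ∈ covectors φ,
        blockChain (A.piecewise (fun _ => medianChain) fun _ => middleChain) t =
      ∑ t with t ∈ covectors φ, blockChain (fun _ => middleChain) t := by
  induction A using Finset.induction with
  | empty => rw [piecewise_empty]
  | insert i A hi ih =>
    rw [piecewise_insert, ← ih]
    set M : ι → (Fin 3 → SignType) → ZMod 2 :=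
      A.piecewise (fun _ => medianChain) fun _ => middleChain with hM
    have hMi : update M i middleChain = M := by
      rw [update_eq_self_iff, hM, piecewise_eq_of_notMem _ _ _ hi]
    have hcycle : ∀ i, IsOddCycle (M i) := fun i => by
      by_cases h : i ∈ A <;> simp [hM, h, isOddCycle_medianChain, isOddCycle_middleChain]
    have hswitch := sum_blockChain_update_signBoundary (i₀ := i) (c := alternatingChain) hφ hE
      (fun i _ => hcycle i) (by decide) (by decide)
    rw [signBoundary_alternatingChain] at hswitch
    have hadd : ∀ t, blockChain (update M i (medianChain + middleChain)) t =
        blockChain (update M i medianChain) t + blockChain (update M i middleChain) t := fun t => by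
      simp only [blockChain_update, Pi.add_apply, add_mul, ite_add_ite, add_zero]
    simp only [hadd, sum_add_distrib, hMi] at hswitch
    exact CharTwo.add_eq_zero.1 hswitch

theorem IsUniform.apply_eq_zero_iff_of_middle (hφ : IsUniform φ)
    (hE : finrank ℝ E = Fintype.card ι + 1) {x : E} (hx0 : x ≠ 0)
    (hx : ∀ i, φ x (some (i, 1)) = 0) (j : Option (ι × Fin 3)) :
    φ x j = 0 ↔ ∃ i, some (i, 1) = j := by
  classical
  have hsub : univ.image (fun i : ι => some (i, (1 : Fin 3))) ⊆ univ.filter (φ x · = 0) := by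
    simpa [image_subset_iff] using hx
  have heq := eq_of_subset_of_card_le hsub <| by
    rw [card_image_of_injective _ fun i i' h => by simpa using h, card_univ]
    exact Nat.lt_succ_iff.1 ((hφ x hx0).trans_eq hE)
  simpa using (Finset.ext_iff.1 heq j).symm

theorem IsUniform.exists_middle (hφ : IsUniform φ)
    (hE : finrank ℝ E = Fintype.card ι + 1) :
    ∃ x, 0 < φ x none ∧ ∀ i k, φ x (some (i, k)) = 0 ↔ k = 1 := by
  obtain ⟨x, hx0, hx⟩ := exists_ne_zero_map_eq_zero
    (LinearMap.funLeft ℝ ℝ (fun i : ι => some (i, (1 : Fin 3))) ∘ₗ φ) (by simp [hE])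
  have hzero := hφ.apply_eq_zero_iff_of_middle hE hx0 (congr_fun hx)
  have hnone : φ x none ≠ 0 := by simp [hzero]
  have hsome : ∀ i k, φ x (some (i, k)) = 0 ↔ k = 1 := by simp [hzero, eq_comm]
  rcases hnone.lt_or_gt with h | h
  exacts [⟨-x, by simpa using h, by simpa using hsome⟩, ⟨x, h, hsome⟩]

theorem IsUniform.sign_eq_sign_of_middle (hφ : IsUniform φ)
    (hE : finrank ℝ E = Fintype.card ι + 1) {x y : E} (hx0 : 0 < φ x none) (hy0 : 0 < φ y none)
    (hx : ∀ i, φ x (some (i, 1)) = 0) (hy : ∀ i, φ y (some (i, 1)) = 0)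
    (j : Option (ι × Fin 3)) : SignType.sign (φ y j) = SignType.sign (φ x j) := by
  have hzero : φ x none • y - φ y none • x = 0 := by
    by_contra h
    have hnone := hφ.apply_eq_zero_iff_of_middle hE h (by simp [hx, hy]) none
    simp [mul_comm] at hnone
  have hj : φ x none * φ y j = φ y none * φ x j := by
    simpa [sub_eq_zero] using congr_fun (congr_arg φ hzero) j
  simpa [sign_mul, sign_pos hx0, sign_pos hy0] using congr_arg SignType.sign hj

theorem sum_blockChain_middleChain [DecidableEq ι] [DecidablePred (· ∈ covectors φ)]
    (hφ : IsUniform φ) (hE : finrank ℝ E = Fintype.card ι + 1) :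
    ∑ t with t ∈ covectors φ, blockChain (fun _ => middleChain) t = 1 := by
  obtain ⟨x, hx0, hx⟩ := hφ.exists_middle hE
  rw [sum_eq_single_of_mem (fun j => SignType.sign (φ x j))
    ((mem_filter_univ _).2 (Set.mem_range_self x))]
  · simp [blockChain, middleChain, signBlock, hx0, hx]
  · rintro t ht hne
    obtain ⟨y, rfl⟩ := (mem_filter_univ t).1 ht
    by_contra h
    simp only [blockChain, ite_eq_right_iff, prod_eq_zero_iff, middleChain, signBlock,
      sign_eq_one_iff, sign_eq_zero_iff, not_forall, not_exists, not_and, mem_univ, true_imp_iff,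
      one_ne_zero, imp_false, not_not] at h
    obtain ⟨hy0, hy⟩ := h
    exact hne <| funext <| hφ.sign_eq_sign_of_middle hE hx0 hy0 (fun i => (hx i 1).2 rfl)
      fun i => (hy i 1).2 rfl

theorem IsUniform.exists_surjective_signBlock
    (hφ : IsUniform φ) (hE : finrank ℝ E = Fintype.card ι + 1) :
    ∃ x ≠ 0, ∀ i, Surjective fun k => SignType.sign (φ x (some (i, k))) := by
  classical
  have hsum := (sum_blockChain_piecewise hφ hE univ).trans (sum_blockChain_middleChain hφ hE)
  rw [piecewise_univ] at hsum
  obtain ⟨t, ht, hne⟩ := exists_ne_zero_of_sum_ne_zero (hsum.trans_ne one_ne_zero)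
  obtain ⟨x, rfl⟩ := (mem_filter_univ t).1 ht
  simp only [blockChain, medianChain, ite_ne_right_iff, prod_ne_zero_iff, sign_eq_one_iff, mem_univ,
    true_imp_iff, ne_eq, one_ne_zero, not_false_eq_true, and_true] at hne
  obtain ⟨hnone, hsurj⟩ := hne
  exact ⟨x, fun hx => hnone.ne' (by simp [hx]), hsurj⟩

end MedianChains

section Perturbation

variable {J : Type*}

theorem finite_setOf_exists_det_submatrix_eq_zero [Finite J] {n : ℕ} (A N : Matrix J (Fin n) ℝ)
    (hN : ∀ κ : Fin n ↪ J, (N.submatrix κ id).det ≠ 0) :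
    {t : ℝ | ∃ κ : Fin n ↪ J, ((t • N + A).submatrix κ id).det = 0}.Finite := by
  let P (κ : Fin n ↪ J) : Polynomial ℝ := Matrix.det ((Polynomial.X : Polynomial ℝ) •
    (N.submatrix κ id).map Polynomial.C + (A.submatrix κ id).map Polynomial.C)
  have hP : ∀ κ, P κ ≠ 0 := fun κ h => hN κ <| by
    rw [← Polynomial.coeff_det_X_add_C_card (N.submatrix κ id) (A.submatrix κ id)]
    exact (congr_arg (Polynomial.coeff · _) h).trans (Polynomial.coeff_zero _)
  have heval : ∀ κ t, (P κ).eval t = ((t • N + A).submatrix κ id).det := fun κ t => by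
    refine ((Polynomial.evalRingHom t).map_det _).trans (congr_arg _ ?_)
    ext i j
    simp [mul_comm t]
  simp only [Set.ofPred_exists, ← heval]
  exact Set.finite_iUnion fun κ => Polynomial.finite_setOfPred_isRoot (hP κ)

theorem isUniform_mulVecLin [Fintype J] {n : ℕ} {A : Matrix J (Fin n) ℝ}
    (hA : ∀ κ : Fin n ↪ J, (A.submatrix κ id).det ≠ 0) : IsUniform A.mulVecLin := by
  classical
  intro x hx
  by_contra! h
  rw [finrank_fin_fun] at h
  obtain ⟨T, hT, hTn⟩ := exists_subset_card_eq h
  let κ := (T.equivFinOfCardEq hTn).symm.toEmbedding.trans (Embedding.subtype _)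
  refine hx (Matrix.eq_zero_of_mulVec_eq_zero (hA κ) (funext fun k => ?_))
  have hk : A.mulVecLin x (κ k) = 0 :=
    (mem_filter_univ (p := fun j => A.mulVecLin x j = 0) _).1
      (hT ((T.equivFinOfCardEq hTn).symm k).2)
  exact hk

-- `N` is a Vandermonde matrix: its maximal minors are nonzero, so each maximal minor of `t • N + A`
-- is a nonzero polynomial in `t`.
theorem dense_setOf_isUniform [Fintype J] {n : ℕ} (A : Matrix J (Fin n) ℝ) :
    ∃ N : Matrix J (Fin n) ℝ, Dense {t : ℝ | IsUniform (t • N + A).mulVecLin} := by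
  let τ : J → ℝ := fun j => (Fintype.equivFin J j : ℕ)
  have hτ : Injective τ :=
    (Nat.cast_injective.comp Fin.val_injective).comp (Fintype.equivFin J).injective
  refine ⟨Matrix.of fun j k => τ j ^ (k : ℕ), ?_⟩
  have := finite_setOf_exists_det_submatrix_eq_zero A (Matrix.of fun j k => τ j ^ (k : ℕ)) fun κ =>
    (Matrix.det_vandermonde_ne_zero_iff (v := τ ∘ κ)).2 (hτ.comp κ.injective)
  refine (this.countable.dense_compl ℝ).mono fun t ht => ?_
  exact isUniform_mulVecLin (by simpa using ht)

theorem exists_ne_zero_map_mem_of_isUniform [Fintype J] {n : ℕ} {C : Set (J → ℝ)}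
    (hC : IsClosed C) (hsmul : ∀ r : ℝ, 0 < r → ∀ a ∈ C, r • a ∈ C)
    (h : ∀ φ : (Fin n → ℝ) →ₗ[ℝ] J → ℝ, IsUniform φ → ∃ x ≠ 0, φ x ∈ C)
    (φ : (Fin n → ℝ) →ₗ[ℝ] J → ℝ) : ∃ x ≠ 0, φ x ∈ C := by
  classical
  obtain ⟨N, hN⟩ := dense_setOf_isUniform (LinearMap.toMatrix' φ)
  let S : Set (Metric.sphere (0 : Fin n → ℝ) 1 × ℝ) :=
    {y | (y.2 • N + LinearMap.toMatrix' φ).mulVec (y.1 : Fin n → ℝ) ∈ C}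
  have hS : IsClosed (Prod.snd '' S) := isClosedMap_snd_of_compactSpace _ <|
    hC.preimage (by fun_prop)
  have huniv : Prod.snd '' S = Set.univ := by
    refine (hN.mono fun t ht => ?_).closure_eq ▸ hS.closure_eq.symm
    obtain ⟨x, hx0, hx⟩ := h _ ht
    refine ⟨(⟨‖x‖⁻¹ • x, ?_⟩, t), ?_, rfl⟩
    · simp [norm_smul, hx0]
    · have := hsmul _ (inv_pos.2 (norm_pos_iff.2 hx0)) _ hx
      rwa [← map_smul] at this
  obtain ⟨⟨x, t⟩, hx, rfl⟩ : 0 ∈ Prod.snd '' S := huniv ▸ Set.mem_univ _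
  exact ⟨x, ne_zero_of_mem_unit_sphere x, by simpa [S] using hx⟩

end Perturbation

section MedianZero

/-- The median of three reals is zero: at most one entry, that at `p`, is positive, and at most one,
that at `q ≠ p`, is negative. -/
def IsMedianZero (a : Fin 3 → ℝ) : Prop :=
  ∃ p q, p ≠ q ∧ (∀ k ≠ p, a k ≤ 0) ∧ ∀ k ≠ q, 0 ≤ a k

theorem isClosed_setOf_isMedianZero : IsClosed {a | IsMedianZero a} := by
  simp only [IsMedianZero, Set.ofPred_exists]
  refine isClosed_iUnion_of_finite fun p => isClosed_iUnion_of_finite fun q => ?_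
  refine isClosed_const.and (.and ?_ ?_) <;>
    simp only [Set.ofPred_forall] <;>
    refine isClosed_iInter fun k => isClosed_iInter fun _ => ?_
  · exact isClosed_le (continuous_apply k) continuous_const
  · exact isClosed_le continuous_const (continuous_apply k)

theorem isMedianZero_of_surjective_sign {a : Fin 3 → ℝ}
    (h : Surjective fun k => SignType.sign (a k)) : IsMedianZero a := by
  have key : ∀ s : Fin 3 → SignType, Surjective s →
    ∃ p q, p ≠ q ∧ (∀ k ≠ p, s k ≤ 0) ∧ ∀ k ≠ q, 0 ≤ s k := by decide
  simpa only [IsMedianZero, sign_nonpos_iff, sign_nonneg_iff] using key _ h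

theorem IsMedianZero.smul {a : Fin 3 → ℝ} (ha : IsMedianZero a) {r : ℝ} (hr : 0 < r) :
    IsMedianZero (r • a) := by
  simpa [IsMedianZero, hr, hr.le, mul_nonneg_iff_of_pos_left, mul_nonpos_iff_pos_imp_nonpos]
    using ha

theorem exists_ne_zero_isMedianZero {ι E : Type*} [Fintype ι] [AddCommGroup E] [Module ℝ E]
    (φ : E →ₗ[ℝ] ι × Fin 3 → ℝ) (h : Fintype.card ι < finrank ℝ E) :
    ∃ x ≠ 0, ∀ i, IsMedianZero fun k => φ x (i, k) := by
  obtain ⟨b, hb⟩ := exists_linearIndependent_of_le_finrank (R := ℝ) (M := E) (Nat.succ_le_of_lt h)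
  let f := Fintype.linearCombination ℝ b
  have hf : Injective f := hb.fintypeLinearCombination_injective
  let ψ : (Fin (Fintype.card ι + 1) → ℝ) →ₗ[ℝ] Option (ι × Fin 3) → ℝ :=
    LinearMap.pi fun j => j.elim 0 fun j => LinearMap.proj j ∘ₗ φ ∘ₗ f
  let C : Set (Option (ι × Fin 3) → ℝ) := {a | ∀ i, IsMedianZero fun k => a (some (i, k))}
  have hC : IsClosed C := by
    simp only [C, Set.ofPred_forall]
    exact isClosed_iInter fun i => isClosed_setOf_isMedianZero.preimage (by fun_prop)
  have hunif : ∀ φ : (Fin (Fintype.card ι + 1) → ℝ) →ₗ[ℝ] Option (ι × Fin 3) → ℝ,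
      IsUniform φ → ∃ x ≠ 0, φ x ∈ C := fun φ hφ => by
    obtain ⟨x, hx0, hx⟩ := hφ.exists_surjective_signBlock (finrank_fin_fun ℝ)
    exact ⟨x, hx0, fun i => isMedianZero_of_surjective_sign (hx i)⟩
  obtain ⟨x, hx0, hx⟩ := exists_ne_zero_map_mem_of_isUniform hC
    (fun r hr a ha i => (ha i).smul hr) hunif ψ
  exact ⟨f x, (map_ne_zero_iff f hf).2 hx0, hx⟩

theorem IsMedianZero.exists_eq_single_sub_single {a : Fin 3 → ℝ} (ha : IsMedianZero a) :
    ∃ p q, p ≠ q ∧ ∃ α β : ℝ, 0 ≤ α ∧ 0 ≤ β ∧ a = Pi.single p α - Pi.single q β := by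
  obtain ⟨p, q, hpq, hp, hq⟩ := ha
  refine ⟨p, q, hpq, a p, -a q, hq p hpq, neg_nonneg.2 (hp q hpq.symm), funext fun k => ?_⟩
  rcases eq_or_ne k p with rfl | hkp
  · simp [hpq]
  rcases eq_or_ne k q with rfl | hkq
  · simp [hkp]
  · simpa [hkp, hkq] using (hp k hkp).antisymm (hq k hkq)

theorem exists_convexHull_range_inter_nonempty {ι V : Type*} [Fintype ι] [AddCommGroup V]
    [Module ℝ V] [FiniteDimensional ℝ V] (y : ι → Fin 3 → V)
    (h : finrank ℝ V + 2 ≤ 2 * Fintype.card ι) :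
    ∃ p q : ι → Fin 3, (∀ i, p i ≠ q i) ∧
      (convexHull ℝ (Set.range fun i => y i (p i)) ∩
        convexHull ℝ (Set.range fun i => y i (q i))).Nonempty := by
  let L : (ι × Fin 3 → ℝ) →ₗ[ℝ] V × ℝ :=
    Fintype.linearCombination ℝ fun j => (y j.1 j.2, 1)
  have hL : Fintype.card ι < finrank ℝ L.ker := by
    have hrank := L.finrank_range_add_finrank_ker
    have hrange := L.range.finrank_le
    rw [finrank_pi, Fintype.card_prod, Fintype.card_fin] at hrank
    rw [finrank_prod, finrank_self] at hrange
    omega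
  obtain ⟨⟨w, hw⟩, hw0, hmed⟩ := exists_ne_zero_isMedianZero L.ker.subtype hL
  choose p q hpq α β hα hβ hwαβ using fun i => (hmed i).exists_eq_single_sub_single
  have hrel : ∑ i, α i • (y i (p i), (1 : ℝ)) = ∑ i, β i • (y i (q i), (1 : ℝ)) := by
    have hLw : ∑ i, ∑ k, w (i, k) • (y i k, (1 : ℝ)) = 0 := by
      simpa [L, Fintype.linearCombination_apply, Fintype.sum_prod_type] using hw
    have hwik : ∀ i k, w (i, k) = Pi.single (M := fun _ => ℝ) (p i) (α i) k -
      Pi.single (M := fun _ => ℝ) (q i) (β i) k := fun i => congr_fun (hwαβ i)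
    rw [← sub_eq_zero, ← hLw, ← sum_sub_distrib]
    refine sum_congr rfl fun i _ => ?_
    simp only [hwik, sub_smul, sum_sub_distrib, Pi.single_apply, ite_smul, zero_smul,
      sum_ite_eq', mem_univ, if_true]
  have hpoint : ∑ i, α i • y i (p i) = ∑ i, β i • y i (q i) := by
    simpa [Prod.fst_sum] using congr_arg Prod.fst hrel
  have hmass : ∑ i, α i = ∑ i, β i := by
    simpa [Prod.snd_sum] using congr_arg Prod.snd hrel
  have hpos : 0 < ∑ i, α i := by
    refine (sum_nonneg fun i _ => hα i).lt_of_ne' fun h0 => hw0 ?_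
    have hα0 : ∀ i, α i = 0 := by simpa using (sum_eq_zero_iff_of_nonneg fun i _ => hα i).1 h0
    have hβ0 : ∀ i, β i = 0 := by
      simpa using (sum_eq_zero_iff_of_nonneg fun i _ => hβ i).1 (hmass.symm.trans h0)
    ext ⟨i, k⟩
    simpa [hα0, hβ0] using congr_fun (hwαβ i) k
  refine ⟨p, q, hpq, univ.centerMass α fun i => y i (p i),
    centerMass_mem_convexHull _ (fun i _ => hα i) hpos fun i _ => Set.mem_range_self i, ?_⟩
  rw [show univ.centerMass α (fun i => y i (p i)) = univ.centerMass β fun i => y i (q i) by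
    simp only [centerMass, hmass, hpoint]]
  exact centerMass_mem_convexHull _ (fun i _ => hβ i) (hmass ▸ hpos)
    fun i _ => Set.mem_range_self i

end MedianZero

section RelativeInterior

theorem lineMap_mem_intrinsicInterior {E : Type*} [AddCommGroup E] [Module ℝ E]
    [TopologicalSpace E] [IsTopologicalAddGroup E] [ContinuousSMul ℝ E] {s : Set E}
    (hs : Convex ℝ s) {x y : E} (hx : x ∈ s) (hy : y ∈ intrinsicInterior ℝ s) {t : ℝ}
    (ht0 : 0 < t) (ht1 : t ≤ 1) : AffineMap.lineMap x y t ∈ intrinsicInterior ℝ s := by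
  obtain ⟨y, hy, rfl⟩ := hy
  let x' : affineSpan ℝ s := ⟨x, subset_affineSpan ℝ s hx⟩
  have : Nonempty (affineSpan ℝ s) := ⟨x'⟩
  refine ⟨AffineMap.homothety x' t y, ?_, rfl⟩
  refine interior_mono ?_ ((AffineMap.homothety_isOpenMap x' t ht0.ne').image_interior_subset _
    ⟨y, hy, rfl⟩)
  rintro _ ⟨z, hz, rfl⟩
  exact hs.lineMap_mem hx hz ⟨ht0.le, ht1⟩

theorem convexHull_range_eq_image_stdSimplex {ι E : Type*} [Fintype ι] [AddCommGroup E]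
    [Module ℝ E] (p : ι → E) :
    convexHull ℝ (Set.range p) = Fintype.linearCombination ℝ p '' stdSimplex ℝ ι := by
  classical
  rw [← convexHull_rangle_single_eq_stdSimplex, LinearMap.image_convexHull, ← Set.range_comp]
  congr 2
  ext i
  simp

theorem sum_smul_mem_intrinsicInterior_convexHull {ι E : Type*} [Fintype ι]
    [NormedAddCommGroup E] [NormedSpace ℝ E] [FiniteDimensional ℝ E] (p : ι → E) {w : ι → ℝ}
    (hw : ∀ i, 0 < w i) (hsum : ∑ i, w i = 1) :
    ∑ i, w i • p i ∈ intrinsicInterior ℝ (convexHull ℝ (Set.range p)) := by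
  let f := Fintype.linearCombination ℝ p
  have hull : convexHull ℝ (Set.range p) = f '' stdSimplex ℝ ι :=
    convexHull_range_eq_image_stdSimplex p
  have hwS : w ∈ stdSimplex ℝ ι := ⟨fun i => (hw i).le, hsum⟩
  obtain ⟨y, hy⟩ := Set.Nonempty.intrinsicInterior (convex_convexHull ℝ (Set.range p))
    (hull ▸ ⟨f w, w, hwS, rfl⟩)
  obtain ⟨u, hu, rfl⟩ := hull ▸ intrinsicInterior_subset hy
  have hw_interior : w ∈ interior (Set.Ici (0 : ι → ℝ)) := by
    rw [← Set.pi_univ_Ici, interior_pi_set Set.finite_univ]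
    simpa using hw
  obtain ⟨t, hq0, ht⟩ := (((eventually_homothety_mem_of_mem_interior ℝ u hw_interior).filter_mono
    nhdsWithin_le_nhds).and (self_mem_nhdsWithin (s := Set.Ioi 1))).exists
  have ht0 : 0 < t := zero_lt_one.trans ht
  set q := AffineMap.homothety u t w with hq
  have hqS : q ∈ stdSimplex ℝ ι := by
    refine ⟨hq0, ?_⟩
    simp [hq, AffineMap.homothety_apply, sum_add_distrib, ← mul_sum, hsum, hu.2]
  have hwq : f w = AffineMap.lineMap (f q) (f u) (1 - t⁻¹) := by
    rw [hq, AffineMap.homothety_apply, AffineMap.lineMap_apply_module]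
    simp only [vsub_eq_sub, vadd_eq_add, map_add, map_smul, map_sub]
    match_scalars <;> field_simp <;> ring
  rw [show ∑ i, w i • p i = _ from hwq]
  exact lineMap_mem_intrinsicInterior (convex_convexHull ℝ _) (hull ▸ ⟨q, hqS, rfl⟩) hy
    (sub_pos.2 (inv_lt_one_of_one_lt₀ ht)) (sub_le_self _ (inv_pos.2 ht0).le)

theorem exists_pos_sum_smul_eq_zero {J E : Type*} [Fintype J] [AddCommGroup E] [Module ℝ E]
    {a : J → E} {x : J → ℝ} (hx : ∀ j, 0 ≤ x j) (hsum : ∑ j, x j • a j = 0)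
    (hspan : Submodule.span ℝ (a '' support x) = ⊤) :
    ∃ z : J → ℝ, (∀ j, 0 < z j) ∧ ∑ j, z j • a j = 0 := by
  classical
  obtain ⟨g, hg⟩ : ∃ g : J → ℝ, ∑ j with x j ≠ 0, g j • a j = -∑ j, a j := by
    rw [← Submodule.mem_span_image_finset_iff_exists_fun', coe_filter_univ]
    exact hspan ▸ Submodule.mem_top
  have hpos : ∀ j, ∀ᶠ r in Filter.atTop, 0 < r * x j + (if x j ≠ 0 then g j else 0) + 1 := by
    intro j
    by_cases hj : x j = 0
    · simp [hj]
    · have hxj : 0 < x j := (hx j).lt_of_ne' hj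
      simp only [hj, ne_eq, not_false_eq_true, if_true, add_assoc]
      exact (Filter.tendsto_atTop_add_const_right _ _
        (Filter.tendsto_id.atTop_mul_const hxj)).eventually_gt_atTop 0
  obtain ⟨r, hr⟩ := (Filter.eventually_all.2 hpos).exists
  refine ⟨_, hr, ?_⟩
  simp only [add_smul, mul_smul, sum_add_distrib, ite_smul, zero_smul, ← sum_filter, hg,
    ← smul_sum, hsum, one_smul, smul_zero, zero_add, neg_add_cancel]

theorem span_image_support_eq_top {J E : Type*} [Fintype J] [AddCommGroup E] [Module ℝ E]
    [FiniteDimensional ℝ E] {a : J → E} (hcard : finrank ℝ E ≤ Fintype.card J)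
    (ha : ∀ T : Finset J, #T = finrank ℝ E → LinearIndependent ℝ fun j : T => a j)
    {x : J → ℝ} (hx : x ≠ 0) (hsum : ∑ j, x j • a j = 0) :
    Submodule.span ℝ (a '' support x) = ⊤ := by
  classical
  have hsupp : finrank ℝ E ≤ #{j | x j ≠ 0} := by
    by_contra! hlt
    obtain ⟨T, hST, hT⟩ := exists_superset_card_eq hlt.le hcard
    have hzero : ∀ j ∉ T, x j = 0 := fun j hj => by simpa using mt (@hST j) hj
    refine hx (funext fun j => ?_)
    by_cases hj : j ∈ T
    · refine Fintype.linearIndependent_iff.1 (ha T hT) (fun j => x j) ?_ ⟨j, hj⟩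
      rw [sum_coe_sort T fun j => x j • a j, ← hsum]
      exact sum_subset (subset_univ T) fun j _ hj => by rw [hzero j hj, zero_smul]
    · exact hzero j hj
  obtain ⟨T, hTS, hT⟩ := exists_subset_card_eq hsupp
  rw [eq_top_iff, ← (ha T hT).span_eq_top_of_card_eq_finrank' (by simp [hT])]
  refine Submodule.span_mono ?_
  rintro _ ⟨j, rfl⟩
  exact ⟨j, by simpa using hTS j.2, rfl⟩

/-- No `finrank ℝ V + 1` of the points `v` lie on a common hyperplane. -/
def InGeneralPosition {α V : Type*} [AddCommGroup V] [Module ℝ V] (v : α → V) : Prop :=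
  ∀ s : Finset α, #s = finrank ℝ V + 1 → AffineIndependent ℝ fun i : s => v i

theorem InGeneralPosition.comp_injective {α β V : Type*} [AddCommGroup V] [Module ℝ V] {v : α → V}
    (hv : InGeneralPosition v) {f : β → α} (hf : Injective f) : InGeneralPosition (v ∘ f) := by
  classical
  intro s hs
  let e : s ↪ s.image f := ⟨fun i => ⟨f i, mem_image_of_mem f i.2⟩, fun i j h =>
    Subtype.ext (hf (congr_arg Subtype.val h))⟩
  exact (hv (s.image f) (by rwa [card_image_of_injective s hf])).comp_embedding e

theorem linearIndependent_prodMk_one {α V : Type*} [AddCommGroup V] [Module ℝ V] {v : α → V}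
    (hv : AffineIndependent ℝ v) : LinearIndependent ℝ fun i => (v i, (1 : ℝ)) := by
  refine linearIndependent_iff'.2 fun s g hg => affineIndependent_iff.1 hv s g ?_ ?_
  · simpa [Prod.snd_sum] using congr_arg Prod.snd hg
  · simpa [Prod.fst_sum] using congr_arg Prod.fst hg

/-- The vectors `(u i, 1)` and `-(w k, 1)`, whose linear dependences with nonnegative coefficients
encode, up to scaling, the common points of the convex hulls of `u` and `w`. -/
def signedLift {ι κ V : Type*} [AddCommGroup V] (u : ι → V) (w : κ → V) : ι ⊕ κ → V × ℝ :=
  Sum.elim (fun i => (u i, 1)) fun k => -(w k, 1)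

theorem sum_smul_signedLift_eq_zero_iff {ι κ V : Type*} [Fintype ι] [Fintype κ] [AddCommGroup V]
    [Module ℝ V] {u : ι → V} {w : κ → V} {z : ι ⊕ κ → ℝ} :
    ∑ j, z j • signedLift u w j = 0 ↔
      ∑ i, z (.inl i) • u i = ∑ k, z (.inr k) • w k ∧ ∑ i, z (.inl i) = ∑ k, z (.inr k) := by
  simp [Prod.ext_iff, signedLift, Prod.fst_sum, Prod.snd_sum, ← sub_eq_add_neg, sub_eq_zero]

theorem InGeneralPosition.linearIndependent_signedLift {ι κ V : Type*} [AddCommGroup V]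
    [Module ℝ V] [FiniteDimensional ℝ V] {u : ι → V} {w : κ → V}
    (h : InGeneralPosition (Sum.elim u w)) (T : Finset (ι ⊕ κ)) (hT : #T = finrank ℝ (V × ℝ)) :
    LinearIndependent ℝ fun j : T => signedLift u w j := by
  convert (linearIndependent_prodMk_one (h T (by simpa using hT))).units_smul
    (fun j => Sum.elim 1 (-1) j.1) with j
  rcases j with ⟨i | k, hj⟩ <;> simp [signedLift]

theorem InGeneralPosition.exists_pos_weights {ι κ V : Type*} [Fintype ι] [Fintype κ]
    [AddCommGroup V] [Module ℝ V] [FiniteDimensional ℝ V] {u : ι → V} {w : κ → V}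
    (hgen : InGeneralPosition (Sum.elim u w))
    (hcard : finrank ℝ V + 1 ≤ Fintype.card ι + Fintype.card κ)
    (h : (convexHull ℝ (Set.range u) ∩ convexHull ℝ (Set.range w)).Nonempty) :
    ∃ l : ι → ℝ, ∃ m : κ → ℝ, (∀ i, 0 < l i) ∧ (∀ k, 0 < m k) ∧ ∑ i, l i = 1 ∧ ∑ k, m k = 1 ∧
      ∑ i, l i • u i = ∑ k, m k • w k := by
  simp only [convexHull_range_eq_image_stdSimplex] at h
  obtain ⟨_, ⟨l, hl, rfl⟩, m, hm, hml⟩ := h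
  have hlm0 : Sum.elim l m ≠ 0 := fun h0 => one_ne_zero <| calc
    1 = ∑ i, l i := hl.2.symm
    _ = 0 := sum_eq_zero fun i _ => congr_fun h0 (Sum.inl i)
  have hsum : ∑ j, Sum.elim l m j • signedLift u w j = 0 :=
    sum_smul_signedLift_eq_zero_iff.2 ⟨hml.symm, hl.2.trans hm.2.symm⟩
  obtain ⟨z, hz, hzsum⟩ := exists_pos_sum_smul_eq_zero
    (Sum.rec hl.1 hm.1 : ∀ j, 0 ≤ Sum.elim l m j) hsum
    (span_image_support_eq_top (by simpa using hcard) hgen.linearIndependent_signedLift hlm0 hsum)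
  obtain ⟨hpoint, hmass⟩ := sum_smul_signedLift_eq_zero_iff.1 hzsum
  set c := ∑ i, z (.inl i)
  have hc : 0 < c := by
    refine sum_pos (fun i _ => hz _) (nonempty_of_sum_ne_zero (f := l) ?_)
    exact hl.2.trans_ne one_ne_zero
  refine ⟨fun i => c⁻¹ * z (.inl i), fun k => c⁻¹ * z (.inr k),
    fun i => mul_pos (inv_pos.2 hc) (hz _), fun k => mul_pos (inv_pos.2 hc) (hz _), ?_, ?_, ?_⟩
  · rw [← mul_sum, inv_mul_cancel₀ hc.ne']
  · rw [← mul_sum, ← hmass, inv_mul_cancel₀ hc.ne']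
  · simp only [mul_smul, ← smul_sum, hpoint]

theorem intrinsicInterior_convexHull_inter_nonempty {ι κ V : Type*} [Fintype ι] [Fintype κ]
    [NormedAddCommGroup V] [NormedSpace ℝ V] [FiniteDimensional ℝ V] {u : ι → V} {w : κ → V}
    (hgen : InGeneralPosition (Sum.elim u w))
    (hcard : finrank ℝ V + 1 ≤ Fintype.card ι + Fintype.card κ)
    (h : (convexHull ℝ (Set.range u) ∩ convexHull ℝ (Set.range w)).Nonempty) :
    (intrinsicInterior ℝ (convexHull ℝ (Set.range u)) ∩
      intrinsicInterior ℝ (convexHull ℝ (Set.range w))).Nonempty := by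
  obtain ⟨l, m, hl, hm, hl1, hm1, hlm⟩ := hgen.exists_pos_weights hcard h
  exact ⟨_, sum_smul_mem_intrinsicInterior_convexHull u hl hl1,
    hlm ▸ sum_smul_mem_intrinsicInterior_convexHull w hm hm1⟩

end RelativeInterior

section Rainbow

variable {α κ : Type*} {P : α → κ}

theorem injective_sumElim_of_leftInverse {p q : κ → α} (hp : LeftInverse P p)
    (hq : LeftInverse P q) (hpq : ∀ i, p i ≠ q i) : Injective (Sum.elim p q) :=
  hp.injective.sumElim hq.injective fun i k h =>
    hpq i (h.trans (congr_arg q ((hp i).symm.trans ((congr_arg P h).trans (hq k))).symm))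

variable [DecidableEq κ]

theorem leftInverse_piecewise {p q : κ → α} (hp : LeftInverse P p) (hq : LeftInverse P q)
    (B : Finset κ) : LeftInverse P (B.piecewise p q) := fun i => by
  by_cases hi : i ∈ B <;> simp [hi, hp i, hq i]

theorem exists_sections_convexHull_inter_nonempty {V : Type*} [AddCommGroup V] [Module ℝ V]
    [FiniteDimensional ℝ V] [Fintype α] (v : α → V) {A : Finset κ} (hA : finrank ℝ V + 2 ≤ 2 * #A)
    (hthree : ∀ i ∈ A, 3 ≤ #{j | P j = i}) (htwo : ∀ i, 2 ≤ #{j | P j = i}) :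
    ∃ p q : κ → α, LeftInverse P p ∧ LeftInverse P q ∧ (∀ i, p i ≠ q i) ∧
      (convexHull ℝ ((v ∘ p) '' A) ∩ convexHull ℝ ((v ∘ q) '' A)).Nonempty := by
  have hemb : ∀ i : A, ∃ f : Fin 3 ↪ α, ∀ k, P (f k) = i := fun i => by
    obtain ⟨f⟩ := Embedding.nonempty_of_card_le (α := Fin 3) (β := {j // P j = i})
      (by simpa [Fintype.card_subtype] using hthree i i.2)
    exact ⟨f.trans (Embedding.subtype _), fun k => (f k).2⟩
  choose f hf using hemb
  obtain ⟨p, q, hpq, hne⟩ := exists_convexHull_range_inter_nonempty (fun i : A => v ∘ f i)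
    (by simpa using hA)
  have hext : ∀ i, ∃ a b, P a = i ∧ P b = i ∧ a ≠ b ∧
      ∀ h : i ∈ A, a = f ⟨i, h⟩ (p ⟨i, h⟩) ∧ b = f ⟨i, h⟩ (q ⟨i, h⟩) := fun i => by
    by_cases h : i ∈ A
    · exact ⟨_, _, hf ⟨i, h⟩ _, hf ⟨i, h⟩ _, (f ⟨i, h⟩).injective.ne (hpq ⟨i, h⟩),
        fun _ => ⟨rfl, rfl⟩⟩
    · obtain ⟨a, ha, b, hb, hab⟩ := one_lt_card.1 (htwo i)
      exact ⟨a, b, (mem_filter_univ a).1 ha, (mem_filter_univ b).1 hb, hab, fun h' => (h h').elim⟩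
  choose p' q' hp hq hpq' hA' using hext
  refine ⟨p', q', hp, hq, hpq', ?_⟩
  have himage : ∀ (r : κ → α) (s : A → Fin 3), (∀ i : A, r i = f i (s i)) →
      (v ∘ r) '' A = Set.range fun i => v (f i (s i)) := fun r s hrs => by
    simp only [Set.image_eq_range, comp_apply, ← hrs]
    rfl
  rwa [himage p' p fun i => (hA' i i.2).1, himage q' q fun i => (hA' i i.2).2]

variable [Fintype κ]

/-- `U` picks exactly one point of every colour of the colouring `P`: it is a hyperedge of the
complete multipartite hypergraph whose parts are the colour classes. -/
def IsRainbow (P : α → κ) (U : Finset α) : Prop :=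
  ∀ i, #{j ∈ U | P j = i} = 1

theorem IsRainbow.card_eq {U : Finset α} (hU : IsRainbow P U) : #U = Fintype.card κ := by
  rw [card_eq_sum_card_fiberwise (f := P) (t := univ) fun _ _ => mem_coe.2 (mem_univ _)]
  simp [hU _]

theorem isRainbow_image [DecidableEq α] {r : κ → α} (hr : LeftInverse P r) :
    IsRainbow P (univ.image r) := by
  intro i
  rw [card_eq_one]
  refine ⟨r i, ext fun j => ?_⟩
  simp only [mem_filter, mem_image, mem_univ, true_and, mem_singleton]
  constructor
  · rintro ⟨⟨k, rfl⟩, rfl⟩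
    rw [hr k]
  · rintro rfl
    exact ⟨⟨i, rfl⟩, hr i⟩

theorem apply_mem_image_piecewise_iff [DecidableEq α] {p q : κ → α} (hp : LeftInverse P p)
    (hq : LeftInverse P q) (hpq : ∀ i, p i ≠ q i) {B : Finset κ} {i : κ} :
    p i ∈ univ.image (B.piecewise p q) ↔ i ∈ B := by
  simp only [mem_image, mem_univ, true_and]
  constructor
  · rintro ⟨k, hk⟩
    obtain rfl : k = i := by
      rw [← leftInverse_piecewise hp hq B k, hk, hp i]
    by_contra hkB
    exact hpq k (by simpa [hkB] using hk.symm)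
  · exact fun hi => ⟨i, by simp [hi]⟩

end Rainbow

section CrossingPairs

variable {α κ V : Type*} [Fintype κ] [DecidableEq κ] [NormedAddCommGroup V] [NormedSpace ℝ V]
  {P : α → κ}

/-- The crossing pairs of hyperedges in the drawing `v` of the complete multipartite hypergraph
whose parts are the colour classes of `P`. -/
def crossingPairs (v : α → V) (P : α → κ) : Set (Sym2 (Finset α)) :=
  {Q | ∃ U W : Finset α, Q = s(U, W) ∧ Disjoint U W ∧ IsRainbow P U ∧ IsRainbow P W ∧
    (intrinsicInterior ℝ (convexHull ℝ (v '' U)) ∩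
      intrinsicInterior ℝ (convexHull ℝ (v '' W))).Nonempty}

theorem mk_image_mem_crossingPairs {v : α → V} [FiniteDimensional ℝ V] [DecidableEq α]
    (hv : InGeneralPosition v) (hcard : finrank ℝ V + 1 ≤ 2 * Fintype.card κ) {p q : κ → α}
    (hp : LeftInverse P p) (hq : LeftInverse P q) (hpq : ∀ i, p i ≠ q i)
    (h : (convexHull ℝ (Set.range (v ∘ p)) ∩ convexHull ℝ (Set.range (v ∘ q))).Nonempty) :
    s(univ.image p, univ.image q) ∈ crossingPairs v P := by
  have hinj := injective_sumElim_of_leftInverse hp hq hpq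
  refine ⟨_, _, rfl, ?_, isRainbow_image hp, isRainbow_image hq, ?_⟩
  · simp only [disjoint_left, mem_image, mem_univ, true_and]
    rintro _ ⟨i, rfl⟩ ⟨k, hk⟩
    exact Sum.inl_ne_inr (hinj (a₁ := .inl i) (a₂ := .inr k) hk.symm)
  · rw [coe_image, coe_image, coe_univ, Set.image_univ, Set.image_univ, ← Set.range_comp,
      ← Set.range_comp]
    refine intrinsicInterior_convexHull_inter_nonempty ?_ (by lia) h
    rw [← Sum.comp_elim]
    exact hv.comp_injective hinj

-- Exchanging the two chosen points of any colour outside `A` keeps the common point of the hulls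
-- over `A`.
theorem two_pow_card_compl_le_ncard_crossingPairs [Finite α] {v : α → V} [FiniteDimensional ℝ V]
    (hv : InGeneralPosition v) {A : Finset κ} (hA : A.Nonempty)
    (hcard : finrank ℝ V + 1 ≤ 2 * Fintype.card κ) {p q : κ → α}
    (hp : LeftInverse P p) (hq : LeftInverse P q) (hpq : ∀ i, p i ≠ q i)
    (h : (convexHull ℝ ((v ∘ p) '' A) ∩ convexHull ℝ ((v ∘ q) '' A)).Nonempty) :
    2 ^ #Aᶜ ≤ (crossingPairs v P).ncard := by
  classical
  let F (B : Finset κ) : Sym2 (Finset α) :=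
    s(univ.image (B.piecewise p q), univ.image (Bᶜ.piecewise p q))
  have hhull : ∀ B : Finset κ, A ⊆ B → ∀ p q : κ → α,
      convexHull ℝ ((v ∘ p) '' A) ⊆ convexHull ℝ (Set.range (v ∘ B.piecewise p q)) := by
    intro B hAB p q
    refine convexHull_mono ?_
    rintro _ ⟨i, hi, rfl⟩
    exact ⟨i, by simp [hAB hi]⟩
  have hF : ∀ B ∈ Icc A univ, F B ∈ crossingPairs v P := by
    intro B hB
    have hAB := (mem_Icc.1 hB).1
    refine mk_image_mem_crossingPairs hv hcard (leftInverse_piecewise hp hq B)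
      (leftInverse_piecewise hp hq Bᶜ) (fun i => ?_) ?_
    · by_cases hi : i ∈ B <;> simp [hi, hpq i, (hpq i).symm]
    · rw [piecewise_compl]
      exact h.mono (Set.inter_subset_inter (hhull B hAB p q) (hhull B hAB q p))
  have hinj : Set.InjOn F (Icc A univ) := by
    intro B hB B' hB' hFB
    obtain ⟨i, hi⟩ := hA
    rcases Sym2.eq_iff.1 hFB with ⟨hU, -⟩ | ⟨hU, -⟩
    · ext k
      rw [← apply_mem_image_piecewise_iff hp hq hpq, hU, apply_mem_image_piecewise_iff hp hq hpq]
    · have hiB := (apply_mem_image_piecewise_iff hp hq hpq).2 ((mem_Icc.1 hB).1 hi)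
      rw [hU, apply_mem_image_piecewise_iff hp hq hpq, mem_compl] at hiB
      exact absurd ((mem_Icc.1 hB').1 hi) hiB
  calc 2 ^ #Aᶜ = (Icc A univ : Set (Finset κ)).ncard := by
        rw [Set.ncard_coe_finset, card_compl, card_Icc_finset (subset_univ A), card_univ]
    _ ≤ _ := Set.ncard_le_ncard_of_injOn F hF hinj (Set.toFinite _)

theorem crossing_pairs_tverberg_step_general [Fintype α] {v : α → V} [FiniteDimensional ℝ V]
    (hv : InGeneralPosition v) {A : Finset κ} (hA : finrank ℝ V + 2 ≤ 2 * #A)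
    (hthree : ∀ i ∈ A, 3 ≤ #{j | P j = i}) (htwo : ∀ i, 2 ≤ #{j | P j = i}) :
    2 ^ #Aᶜ ≤ (crossingPairs v P).ncard := by
  obtain ⟨p, q, hp, hq, hpq, h⟩ := exists_sections_convexHull_inter_nonempty v hA hthree htwo
  exact two_pow_card_compl_le_ncard_crossingPairs hv (card_pos.1 (by lia))
    (by have := card_le_univ A; lia) hp hq hpq h

end CrossingPairs

/-- Let `d ≥ 4` and let `3(⌈d/2⌉+1) + 2(⌊d/2⌋-1)` points in general
position in `ℝ^d` be partitioned into `d` parts, the first `⌈d/2⌉+1` parts of size `3`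
and the remaining `⌊d/2⌋-1` parts of size `2`. Then there are at least `2^(⌊d/2⌋-1)`
unordered pairs `{U', W'}` of disjoint `d`-element subsets, each containing exactly one
point from every part, whose convex hulls share a common point of their relative
(intrinsic) interiors: every `d`-dimensional rectilinear drawing of
`K_{(⌈d/2⌉+1)×3+(⌊d/2⌋-1)×2}^d` has at least `2^(⌊d/2⌋-1)` crossing pairs of
hyperedges. -/
theorem crossing_pairs_tverberg_step (d : ℕ) (hd : 4 ≤ d)
    (v : Fin (3 * ((d + 1) / 2 + 1) + 2 * (d / 2 - 1)) → EuclideanSpace ℝ (Fin d))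
    (hinj : Function.Injective v)
    (hgen : ∀ s : Finset (Fin (3 * ((d + 1) / 2 + 1) + 2 * (d / 2 - 1))),
      s.card = d + 1 → AffineIndependent ℝ (fun i : s => v i.1))
    (P : Fin (3 * ((d + 1) / 2 + 1) + 2 * (d / 2 - 1)) → Fin d)
    (hP : ∀ i : Fin d, (Finset.univ.filter fun j => P j = i).card =
      if (i : ℕ) < (d + 1) / 2 + 1 then 3 else 2) :
    (2 ^ (d / 2 - 1) : ℕ) ≤
      ({Q : Sym2 (Finset (Fin (3 * ((d + 1) / 2 + 1) + 2 * (d / 2 - 1)))) |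
        ∃ U' W' : Finset (Fin (3 * ((d + 1) / 2 + 1) + 2 * (d / 2 - 1))),
          Q = s(U', W') ∧ Disjoint U' W' ∧ U'.card = d ∧ W'.card = d ∧
          (∀ i : Fin d, (U'.filter fun j => P j = i).card = 1) ∧
          (∀ i : Fin d, (W'.filter fun j => P j = i).card = 1) ∧
          (intrinsicInterior ℝ (convexHull ℝ (v '' (U' : Set _))) ∩
            intrinsicInterior ℝ (convexHull ℝ (v '' (W' : Set _)))).Nonempty}).ncard := by
  let A : Finset (Fin d) := {i | (i : ℕ) < (d + 1) / 2 + 1}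
  have hA : #A = (d + 1) / 2 + 1 := by
    rw [← Fintype.card_subtype, Fintype.card_fin_lt_of_le (by lia)]
  have hgen' : InGeneralPosition v := fun s hs => hgen s (by simpa using hs)
  have hmain := crossing_pairs_tverberg_step_general (A := A) hgen'
    (by rw [finrank_euclideanSpace_fin]; lia)
    (fun i hi => by rw [hP, if_pos ((mem_filter_univ i).1 hi)])
    (fun i => by rw [hP]; split_ifs <;> lia)
  rw [card_compl, Fintype.card_fin, hA, show d - ((d + 1) / 2 + 1) = d / 2 - 1 by lia] at hmain
  refine hmain.trans (Set.ncard_le_ncard ?_ (Set.toFinite _))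
  rintro Q ⟨U, W, rfl, hdisj, hU, hW, hcross⟩
  exact ⟨U, W, rfl, hdisj, by simpa using hU.card_eq, by simpa using hW.card_eq, hU, hW, hcross⟩
end

section
/- Let d ≥ 3 and let v_1, …, v_{2d+2} be 2d+2 points in general position in ℝ^d (every d+1 of them affinely independent), partitioned into d parts L_1 = {v_1, v_2, v_3}, L_2 = {v_4, v_5, v_6}, and L_k = {v_{2k+1}, v_{2k+2}} for 3 ≤ k ≤ d. Then there exist disjoint subsets V_a, V_b ⊆ {v_1, …, v_{2d+2}} satisfying: (i) 2 ≤ |V_a| ≤ d and 2 ≤ |V_b| ≤ d; (ii) |V_a| + |V_b| ≥ d + 2; (iii) |V_a ∩ L_i| ≤ 1 and |V_b ∩ L_i| ≤ 1 for every i with 1 ≤ i ≤ d; and (iv) the convex hulls of V_a and V_b contain a common point in their relative (intrinsic) interiors. -/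
/-- Part index (0-based) of the `j`-th vertex (0-based) of `K_{2×3+(d-2)×2}^d`:
vertices `0,1,2` form part `0`, vertices `3,4,5` form part `1`, and vertices
`2k, 2k+1` (for `k ≥ 3`) form part `k - 1`. -/
def partIdx (j : ℕ) : ℕ := if j < 3 then 0 else if j < 6 then 1 else j / 2 - 1

/-!
Affine dependencies `w` among the points of `v` form a space of dimension at least `d + 1`.
Requiring the two values on each pair of vertices to cancel leaves dimension at least `3`. On a
triple, having at most one positive and at most one negative value means that the median vanishes,
and the median is an odd function. So a nonzero dependency adapted to all parts is a common zero
of two odd functions on a three-dimensional space. Since one of them is the median of a linear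
map, this case of the Borsuk-Ulam theorem (which replaces the Ham-Sandwich theorem) reduces to the
intermediate value theorem. The positive and the negative part of the dependency are the two
vertex sets; general position forces at least `d + 2` nonzero values.
-/

section Median

variable {α : Type*} [LinearOrder α]

/-- The median of three elements of a linear order. A weight on a triple of vertices has median
zero exactly when it is positive at most once and negative at most once. -/
def median (x : Fin 3 → α) : α := max (min (x 0) (x 1)) (min (max (x 0) (x 1)) (x 2))

lemma eq_of_median_le {c : α} {x : Fin 3 → α} (hx : median x ≤ c) {i j : Fin 3} (hi : c < x i)
    (hj : c < x j) : i = j := by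
  unfold median at hx
  fin_cases i <;> fin_cases j <;> grind

lemma continuous_median [TopologicalSpace α] [OrderClosedTopology α] :
    Continuous (median : (Fin 3 → α) → α) := by
  unfold median
  fun_prop

lemma median_neg [AddCommGroup α] [IsOrderedAddMonoid α] (x : Fin 3 → α) :
    median (-x) = -median x := by
  simp only [median, Pi.neg_apply]
  grind

lemma median_smul [Ring α] [IsOrderedRing α] (c : α) (x : Fin 3 → α) :
    median (c • x) = c * median x := by
  have median_smul_of_nonneg {c : α} (hc : 0 ≤ c) : median (c • x) = c * median x := by
    simp only [median, Pi.smul_apply, smul_eq_mul, mul_max_of_nonneg _ _ hc,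
      mul_min_of_nonneg _ _ hc]
  rcases le_total 0 c with hc | hc
  · exact median_smul_of_nonneg hc
  · simpa [median_neg] using median_smul_of_nonneg (neg_nonneg.2 hc)

lemma median_single_sub_single [AddCommGroup α] [IsOrderedAddMonoid α] {i j : Fin 3} (hij : i ≠ j)
    {s t : α} (hs : 0 ≤ s) (ht : 0 ≤ t) :
    median (Pi.single i s - Pi.single j t : Fin 3 → α) = 0 := by
  fin_cases i <;> fin_cases j <;> simp [median] at hij ⊢ <;> grind

end Median

section OddFunctions

lemma exists_mem_eq_zero_of_mul_nonpos {X : Type*} [TopologicalSpace X] {S : Set X}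
    (hS : IsPreconnected S) {g : X → ℝ} (hg : ContinuousOn g S) {a b : X} (ha : a ∈ S) (hb : b ∈ S)
    (hab : g a * g b ≤ 0) : ∃ x ∈ S, g x = 0 := by
  rcases mul_nonpos_iff.1 hab with ⟨hga, hgb⟩ | ⟨hga, hgb⟩
  · exact hS.intermediate_value hb ha hg ⟨hgb, hga⟩
  · exact hS.intermediate_value ha hb hg ⟨hga, hgb⟩

-- Of the three values of `g` at the standard basis, two have the same sign, say at `e i` and `e j`.
-- Then `g` changes sign on the segment from `e i` to `-e j`, on which the median vanishes.
lemma exists_ne_zero_median_eq_zero_of_odd {g : (Fin 3 → ℝ) → ℝ} (hg : Continuous g)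
    (hodd : g.Odd) : ∃ x ≠ 0, median x = 0 ∧ g x = 0 := by
  let e (i : Fin 3) : Fin 3 → ℝ := Pi.single i 1
  obtain ⟨i, j, hij, hsign⟩ : ∃ i j, i ≠ j ∧ (0 ≤ g (e i) ↔ 0 ≤ g (e j)) := by
    simpa using Fintype.exists_ne_map_eq_of_card_lt (fun i ↦ decide (0 ≤ g (e i))) (by simp)
  have hprod : g (e i) * g (-e j) ≤ 0 := by
    rw [hodd, mul_neg, neg_nonpos]
    by_cases hi : 0 ≤ g (e i)
    · exact mul_nonneg hi (hsign.1 hi)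
    · exact mul_nonneg_of_nonpos_of_nonpos (le_of_not_ge hi) (le_of_not_ge (mt hsign.2 hi))
  obtain ⟨x, ⟨s, t, hs, ht, hst, hx⟩, hgx⟩ := exists_mem_eq_zero_of_mul_nonpos
    (convex_segment (e i) (-e j)).isPreconnected hg.continuousOn
    (left_mem_segment ℝ _ _) (right_mem_segment ℝ _ _) hprod
  replace hx : x = Pi.single i s - Pi.single j t := by
    simp [← hx, e, sub_eq_add_neg, ← Pi.single_smul]
  refine ⟨x, fun hx0 ↦ ?_, hx ▸ median_single_sub_single hij hs ht, hgx⟩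
  have hs0 : s = 0 := by simpa [hx, hij] using congrFun hx0 i
  have ht0 : t = 0 := by simpa [hx, hij.symm] using congrFun hx0 j
  linarith

variable {E : Type*} [AddCommGroup E] [Module ℝ E]

lemma odd_median_linearMap (A : E →ₗ[ℝ] (Fin 3 → ℝ)) : Function.Odd fun x ↦ median (A x) := by
  intro x
  simp only [map_neg, median_neg]

variable [TopologicalSpace E] [IsTopologicalAddGroup E] [ContinuousSMul ℝ E]

lemma exists_ne_zero_eq_zero_of_odd (hE : 1 < Module.rank ℝ E) {g : E → ℝ} (hg : Continuous g)
    (hodd : g.Odd) : ∃ x ≠ 0, g x = 0 := by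
  have : Nontrivial E := rank_pos_iff_nontrivial.1 (zero_lt_one.trans hE)
  obtain ⟨p, hp⟩ := exists_ne (0 : E)
  refine exists_mem_eq_zero_of_mul_nonpos
    (isConnected_compl_singleton_of_one_lt_rank hE 0).isPreconnected hg.continuousOn
    hp (neg_ne_zero.2 hp) ?_
  rw [hodd, mul_neg]
  exact neg_nonpos.2 (mul_self_nonneg _)

variable [T2Space E] [FiniteDimensional ℝ E]

lemma continuous_median_linearMap (A : E →ₗ[ℝ] (Fin 3 → ℝ)) : Continuous fun x ↦ median (A x) :=
  continuous_median.comp A.continuous_of_finiteDimensional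

-- If `median (A p) = 0`, then `median ∘ A` vanishes on the whole plane spanned by `p` and `k`.
lemma exists_ne_zero_median_map_eq_zero_of_mem_ker (hE : 3 ≤ Module.finrank ℝ E)
    {A : E →ₗ[ℝ] (Fin 3 → ℝ)} {k : E} (hAk : A k = 0) (hk : k ≠ 0) {g : E → ℝ}
    (hg : Continuous g) (hodd : g.Odd) : ∃ w ≠ 0, median (A w) = 0 ∧ g w = 0 := by
  obtain ⟨F, hF⟩ := (ℝ ∙ k).exists_isCompl
  have hFrank : 1 < Module.finrank ℝ F := by
    have := Submodule.finrank_add_eq_of_isCompl hF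
    rw [finrank_span_singleton hk] at this
    omega
  obtain ⟨⟨p, hpF⟩, hp, hAp⟩ := exists_ne_zero_eq_zero_of_odd
    (Module.lt_rank_of_lt_finrank hFrank) (continuous_median_linearMap (A ∘ₗ F.subtype))
    (odd_median_linearMap (A ∘ₗ F.subtype))
  replace hp : p ≠ 0 := by simpa using hp
  replace hAp : median (A p) = 0 := hAp
  have hpk : Disjoint (ℝ ∙ p) (ℝ ∙ k) :=
    hF.symm.disjoint.mono_left ((Submodule.span_singleton_le_iff_mem p F).2 hpF)
  have hPrank : 1 < Module.finrank ℝ ((ℝ ∙ p) ⊔ (ℝ ∙ k) : Submodule ℝ E) := by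
    have := Submodule.finrank_sup_add_finrank_inf_eq (ℝ ∙ p) (ℝ ∙ k)
    rw [hpk.eq_bot, finrank_bot, finrank_span_singleton hp, finrank_span_singleton hk] at this
    omega
  obtain ⟨⟨w, hwP⟩, hw, hgw⟩ := exists_ne_zero_eq_zero_of_odd
    (Module.lt_rank_of_lt_finrank hPrank) (hg.comp continuous_subtype_val) (fun x ↦ hodd x)
  refine ⟨w, by simpa using hw, ?_, hgw⟩
  obtain ⟨s, t, rfl⟩ : ∃ s t : ℝ, s • p + t • k = w := by
    simpa [Submodule.mem_sup, Submodule.mem_span_singleton] using hwP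
  rw [map_add, map_smul, map_smul, hAk, smul_zero, add_zero, median_smul, hAp, mul_zero]

lemma exists_ne_zero_median_map_eq_zero_of_odd (hE : 3 ≤ Module.finrank ℝ E)
    (A : E →ₗ[ℝ] (Fin 3 → ℝ)) {g : E → ℝ} (hg : Continuous g) (hodd : g.Odd) :
    ∃ w ≠ 0, median (A w) = 0 ∧ g w = 0 := by
  by_cases hA : Function.Injective A
  · have hfinrank : Module.finrank ℝ E = Module.finrank ℝ (Fin 3 → ℝ) :=
      le_antisymm (LinearMap.finrank_le_finrank_of_injective hA) (by simpa using hE)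
    have hsurj := (LinearMap.injective_iff_surjective_of_finrank_eq_finrank hfinrank).1 hA
    obtain ⟨B, hB⟩ := A.exists_rightInverse_of_surjective (LinearMap.range_eq_top.2 hsurj)
    have hAB (x) : A (B x) = x := LinearMap.congr_fun hB x
    obtain ⟨x, hx, hmed, hgx⟩ := exists_ne_zero_median_eq_zero_of_odd (g := g ∘ B)
      (hg.comp B.continuous_of_finiteDimensional) (fun x ↦ by simp [hodd (B x)])
    refine ⟨B x, fun hBx ↦ hx ?_, by rwa [hAB], hgx⟩
    rw [← hAB x, hBx, map_zero]
  · obtain ⟨k, hAk, hk⟩ : ∃ k, A k = 0 ∧ k ≠ 0 := by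
      simpa [injective_iff_map_eq_zero] using hA
    exact exists_ne_zero_median_map_eq_zero_of_mem_ker hE hAk hk hg hodd

lemma exists_ne_zero_map_eq_zero_median_map_eq_zero {W : Type*} [AddCommGroup W] [Module ℝ W]
    [FiniteDimensional ℝ W] (Φ : E →ₗ[ℝ] W) (hΦ : Module.finrank ℝ W + 3 ≤ Module.finrank ℝ E)
    (A B : E →ₗ[ℝ] (Fin 3 → ℝ)) :
    ∃ w ≠ 0, Φ w = 0 ∧ median (A w) = 0 ∧ median (B w) = 0 := by
  have hker : 3 ≤ Module.finrank ℝ Φ.ker := by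
    have hrank := Φ.finrank_range_add_finrank_ker
    have hrange := Φ.range.finrank_le
    omega
  obtain ⟨⟨w, hΦw⟩, hw, hA, hB⟩ := exists_ne_zero_median_map_eq_zero_of_odd hker
    (A ∘ₗ Φ.ker.subtype) (continuous_median_linearMap (B ∘ₗ Φ.ker.subtype))
    (odd_median_linearMap (B ∘ₗ Φ.ker.subtype))
  exact ⟨w, by simpa using hw, hΦw, hA, hB⟩

end OddFunctions

section IntrinsicInterior

open Finset

open AffineMap in
lemma openSegment_subset_intrinsicInterior {E : Type*} [AddCommGroup E] [Module ℝ E]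
    [TopologicalSpace E] [IsTopologicalAddGroup E] [ContinuousSMul ℝ E] {C : Set E}
    (hC : Convex ℝ C) {y z : E} (hy : y ∈ intrinsicInterior ℝ C) (hz : z ∈ C) :
    openSegment ℝ y z ⊆ intrinsicInterior ℝ C := by
  rintro _ ⟨a, b, ha, hb, hab, rfl⟩
  obtain ⟨y, hy, rfl⟩ := hy
  let C' : Set (affineSpan ℝ C) := (↑) ⁻¹' C
  let z' : affineSpan ℝ C := ⟨z, subset_affineSpan ℝ C hz⟩
  have : Nonempty (affineSpan ℝ C) := ⟨z'⟩
  have hcoe (u : affineSpan ℝ C) : (homothety z' a u : E) = a • (u : E) + b • z := by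
    rw [eq_sub_of_add_eq' hab]
    simp only [homothety_apply, AffineSubspace.coe_vadd, Submodule.coe_smul,
      AffineSubspace.coe_vsub, vsub_eq_sub, vadd_eq_add, z']
    module
  have hmaps : homothety z' a '' interior C' ⊆ C' := by
    rintro _ ⟨u, hu, rfl⟩
    rw [Set.mem_preimage, hcoe]
    exact hC (interior_subset (s := C') hu) hz ha.le hb.le hab
  have hopen : IsOpen (homothety z' a '' interior C') :=
    homothety_isOpenMap z' a ha.ne' _ isOpen_interior
  exact ⟨homothety z' a y, interior_maximal hmaps hopen ⟨y, hy, rfl⟩, hcoe y⟩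

lemma exists_mem_convexHull_sum_smul_mem_openSegment {E : Type*} [AddCommGroup E] [Module ℝ E]
    {T : Finset E} {w : E → ℝ} (hw : ∀ e ∈ T, 0 < w e) (hw1 : ∑ e ∈ T, w e = 1) {y : E}
    (hy : y ∈ convexHull ℝ (T : Set E)) :
    ∃ z ∈ convexHull ℝ (T : Set E), ∑ e ∈ T, w e • e ∈ openSegment ℝ y z := by
  obtain ⟨u, hu0, hu1, rfl⟩ := mem_convexHull'.1 hy
  have hT : T.Nonempty := nonempty_of_sum_ne_zero (hw1.trans_ne one_ne_zero)
  obtain ⟨e₀, he₀, hmin⟩ := T.exists_min_image w hT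
  have hwe₀ : w e₀ ≤ 1 := hw1 ▸ single_le_sum (fun e he ↦ (hw e he).le) he₀
  obtain ⟨t, ht0, htw⟩ := exists_between (hw e₀ he₀)
  have ht1 : 0 < 1 - t := by linarith
  have hnonneg : ∀ e ∈ T, 0 ≤ w e - t * u e := fun e he ↦ sub_nonneg.2 <| calc
    t * u e ≤ t * 1 := by gcongr; exact hu1 ▸ single_le_sum hu0 he
    _ ≤ w e := by linarith [hmin e he]
  have hsum : ∑ e ∈ T, (w e - t * u e) = 1 - t := by
    rw [sum_sub_distrib, ← mul_sum, hw1, hu1, mul_one]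
  refine ⟨_, T.centerMass_id_mem_convexHull hnonneg (hsum.symm ▸ ht1), t, 1 - t, ht0, ht1,
    add_sub_cancel t 1, ?_⟩
  rw [centerMass, hsum, smul_inv_smul₀ ht1.ne']
  simp only [id, sub_smul, mul_smul, sum_sub_distrib, ← smul_sum, add_sub_cancel]

variable {ι E : Type*} [NormedAddCommGroup E] [NormedSpace ℝ E] [FiniteDimensional ℝ E]

lemma sum_smul_mem_intrinsicInterior_convexHull_s8 {T : Finset E} {w : E → ℝ}
    (hw : ∀ e ∈ T, 0 < w e) (hw1 : ∑ e ∈ T, w e = 1) :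
    ∑ e ∈ T, w e • e ∈ intrinsicInterior ℝ (convexHull ℝ (T : Set E)) := by
  have hT : T.Nonempty := nonempty_of_sum_ne_zero (hw1.trans_ne one_ne_zero)
  have hC := convex_convexHull ℝ (T : Set E)
  obtain ⟨y, hy⟩ := (Set.Nonempty.convexHull (𝕜 := ℝ) hT).intrinsicInterior hC
  obtain ⟨z, hz, hmem⟩ :=
    exists_mem_convexHull_sum_smul_mem_openSegment hw hw1 (intrinsicInterior_subset hy)
  exact openSegment_subset_intrinsicInterior hC hy hz hmem

lemma centerMass_mem_intrinsicInterior_convexHull {T : Finset ι} (hT : T.Nonempty) {w : ι → ℝ}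
    (hw : ∀ i ∈ T, 0 < w i) (v : ι → E) :
    T.centerMass w v ∈ intrinsicInterior ℝ (convexHull ℝ (v '' T)) := by
  classical
  have hpos : 0 < ∑ i ∈ T, w i := sum_pos hw hT
  let W (e : E) : ℝ := (∑ i ∈ T, w i)⁻¹ * ∑ i ∈ T with v i = e, w i
  have hWpos : ∀ e ∈ T.image v, 0 < W e := by
    intro e he
    refine mul_pos (inv_pos.2 hpos) (sum_pos (fun i hi ↦ hw i (mem_filter.1 hi).1) ?_)
    simpa [Finset.Nonempty] using he
  have hmaps : ∀ i ∈ T, v i ∈ T.image v := fun i ↦ mem_image_of_mem v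
  have hWsum : ∑ e ∈ T.image v, W e = 1 := by
    rw [← mul_sum, sum_fiberwise_of_maps_to hmaps, inv_mul_cancel₀ hpos.ne']
  have hcenter : T.centerMass w v = ∑ e ∈ T.image v, W e • e := by
    simp only [W, mul_smul, sum_smul, ← smul_sum, centerMass]
    rw [← sum_fiberwise_of_maps_to hmaps fun i ↦ w i • v i]
    refine congrArg _ (sum_congr rfl fun e _ ↦ sum_congr rfl fun i hi ↦ ?_)
    rw [(mem_filter.1 hi).2]
  rw [hcenter, ← coe_image]
  exact sum_smul_mem_intrinsicInterior_convexHull_s8 hWpos hWsum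

end IntrinsicInterior

section AffineDependencies

open Finset

variable {ι E : Type*} [Fintype ι]

lemma sum_filter_ne_zero_eq_add {α M : Type*} [LinearOrder α] [Zero α] [AddCommMonoid M]
    (w : ι → α) (f : ι → M) :
    ∑ i with w i ≠ 0, f i = ∑ i with 0 < w i, f i + ∑ i with w i < 0, f i := by
  classical
  rw [← sum_union (disjoint_filter.2 fun _ _ ↦ lt_asymm), ← filter_or]
  simp only [ne_iff_gt_or_lt]

lemma intrinsicInterior_convexHull_inter_nonempty_of_sum_smul_eq_zero [NormedAddCommGroup E]
    [NormedSpace ℝ E] [FiniteDimensional ℝ E] {v : ι → E} {w : ι → ℝ} (hw : w ≠ 0)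
    (hsum : ∑ i, w i = 0) (hsumv : ∑ i, w i • v i = 0) :
    (intrinsicInterior ℝ (convexHull ℝ (v '' ({i | 0 < w i} : Finset ι))) ∩
      intrinsicInterior ℝ (convexHull ℝ (v '' ({i | w i < 0} : Finset ι)))).Nonempty := by
  obtain ⟨i, hi⟩ := Function.ne_iff.1 hw
  obtain ⟨p, -, hp⟩ := exists_pos_of_sum_zero_of_exists_nonzero w hsum ⟨i, mem_univ i, hi⟩
  obtain ⟨n, -, hn⟩ := exists_pos_of_sum_zero_of_exists_nonzero (-w) (by simpa using hsum)
    ⟨i, mem_univ i, neg_ne_zero.2 hi⟩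
  have hcenter : centerMass {i | 0 < w i} w v = centerMass {i | w i < 0} (-w) v := by
    rw [centerMass_neg_left]
    refine centerMass_of_sum_add_sum_eq_zero ?_ ?_
    · rw [← sum_filter_ne_zero_eq_add, sum_filter_ne_zero, hsum]
    · rw [← sum_filter_ne_zero_eq_add, sum_filter_of_ne fun i _ ↦ left_ne_zero_of_smul, hsumv]
  refine ⟨centerMass {i | 0 < w i} w v,
    centerMass_mem_intrinsicInterior_convexHull ⟨p, by simpa using hp⟩ (by simp) v, ?_⟩
  rw [hcenter]
  exact centerMass_mem_intrinsicInterior_convexHull ⟨n, by simpa using hn⟩ (by simp) v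

lemma lt_card_filter_ne_zero_of_sum_smul_eq_zero {k : Type*} [Ring k] [DecidableEq k]
    [AddCommGroup E] [Module k E] {n : ℕ} (hn : n ≤ Fintype.card ι) {v : ι → E}
    (hgen : ∀ s : Finset ι, #s = n → AffineIndependent k (fun i : s ↦ v i)) {w : ι → k}
    (hw : w ≠ 0) (hsum : ∑ i, w i = 0) (hsumv : ∑ i, w i • v i = 0) :
    n < #{i | w i ≠ 0} := by
  by_contra! hle
  obtain ⟨s, hsupp, hs⟩ := exists_superset_card_eq hle hn
  have hzero : ∀ i ∉ s, w i = 0 := fun i hi ↦ by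
    by_contra h
    exact hi (hsupp (by simpa using h))
  have hsum_s : ∑ i : s, w i = 0 := by
    rw [sum_coe_sort s w, sum_subset s.subset_univ fun i _ ↦ hzero i, hsum]
  have hsumv_s : ∑ i : s, w i • v i = 0 := by
    rw [sum_coe_sort s fun i ↦ w i • v i,
      sum_subset s.subset_univ fun i _ hi ↦ by rw [hzero i hi, zero_smul], hsumv]
  refine hw (funext fun i ↦ ?_)
  by_cases hi : i ∈ s
  · exact (hgen s hs).eq_zero_of_sum_eq_zero hsum_s hsumv_s ⟨i, hi⟩ (mem_univ _)
  · exact hzero i hi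

end AffineDependencies

section Parts

open Finset

lemma partIdx_lt {d j : ℕ} (hd : 2 ≤ d) (hj : j < 2 * d + 2) : partIdx j < d := by
  unfold partIdx
  split_ifs <;> omega

lemma partIdx_eq_iff_of_lt {i j : ℕ} (hij : i < j) :
    partIdx i = partIdx j ↔
      j < 3 ∨ (3 ≤ i ∧ j < 6) ∨ ∃ k, i = 2 * k + 6 ∧ j = 2 * k + 7 := by
  unfold partIdx
  constructor
  · intro h
    by_cases hi : i < 6
    · split_ifs at h <;> omega
    · refine .inr (.inr ⟨i / 2 - 3, ?_⟩)
      split_ifs at h <;> omega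
  · rintro (h | h | ⟨k, rfl, rfl⟩) <;> split_ifs <;> omega

lemma card_filter_eq_le_one_of_injOn {ι κ : Type*} [DecidableEq κ] {f : ι → κ} {T : Finset ι}
    (hf : Set.InjOn f T) (b : κ) : #{j ∈ T | f j = b} ≤ 1 := by
  simp only [card_le_one, mem_filter]
  exact fun i hi j hj ↦ hf hi.1 hj.1 (hi.2.trans hj.2.symm)

variable {d : ℕ}

lemma card_le_of_injOn_partIdx (hd : 2 ≤ d) {T : Finset (Fin (2 * d + 2))}
    (hT : Set.InjOn (fun j : Fin (2 * d + 2) ↦ partIdx j) T) : #T ≤ d := by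
  simpa using card_le_card_of_injOn (t := range d) _
    (fun j _ ↦ mem_coe.2 (mem_range.2 (partIdx_lt hd j.isLt))) hT

/-- A weight on the vertices is balanced if its median on each triple of `partIdx` vanishes and its
values on each pair cancel. This forces at most one positive and at most one negative value in each
part, by conditions that are odd in the weight. -/
structure IsBalanced (hd : 2 ≤ d) (w : Fin (2 * d + 2) → ℝ) : Prop where
  median_fst : median (fun k : Fin 3 ↦ w ⟨k, by omega⟩) = 0
  median_snd : median (fun k : Fin 3 ↦ w ⟨k + 3, by omega⟩) = 0
  add_eq_zero (k : Fin (d - 2)) : w ⟨2 * k + 6, by omega⟩ + w ⟨2 * k + 7, by omega⟩ = 0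

lemma IsBalanced.neg {hd : 2 ≤ d} {w : Fin (2 * d + 2) → ℝ} (hw : IsBalanced hd w) :
    IsBalanced hd (-w) where
  median_fst := (median_neg _).trans (neg_eq_zero.2 hw.median_fst)
  median_snd := (median_neg _).trans (neg_eq_zero.2 hw.median_snd)
  add_eq_zero k := by
    simp only [Pi.neg_apply]
    linear_combination -hw.add_eq_zero k

lemma IsBalanced.injOn_partIdx {hd : 2 ≤ d} {w : Fin (2 * d + 2) → ℝ} (hw : IsBalanced hd w) :
    Set.InjOn (fun j : Fin (2 * d + 2) ↦ partIdx j) {j | 0 < w j} := by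
  have not_lt_of_pos ⦃i j : Fin (2 * d + 2)⦄ (hi : 0 < w i) (hj : 0 < w j)
      (hpart : partIdx i = partIdx j) : ¬ i < j := by
    intro hij
    obtain ⟨i, hid⟩ := i
    obtain ⟨j, hjd⟩ := j
    rw [Fin.mk_lt_mk] at hij
    obtain hj3 | ⟨hi3, hj6⟩ | ⟨k, rfl, rfl⟩ := (partIdx_eq_iff_of_lt hij).1 hpart
    · have := eq_of_median_le hw.median_fst.le (i := ⟨i, by omega⟩) (j := ⟨j, hj3⟩) hi hj
      grind
    · obtain ⟨i, rfl⟩ := Nat.exists_eq_add_of_le' hi3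
      obtain ⟨j, rfl⟩ := Nat.exists_eq_add_of_le' (hi3.trans hij.le)
      have := eq_of_median_le hw.median_snd.le (i := ⟨i, by omega⟩) (j := ⟨j, by omega⟩) hi hj
      grind
    · have := hw.add_eq_zero ⟨k, by omega⟩
      linarith
  exact fun i hi j hj hpart ↦ le_antisymm (not_lt.1 (not_lt_of_pos hj hi hpart.symm))
    (not_lt.1 (not_lt_of_pos hi hj hpart))

lemma exists_isBalanced_of_finrank_le {E : Type*} [AddCommGroup E] [Module ℝ E]
    [FiniteDimensional ℝ E] (hd : 2 ≤ d) (hE : Module.finrank ℝ E ≤ d)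
    (v : Fin (2 * d + 2) → E) :
    ∃ w ≠ 0, ∑ i, w i = 0 ∧ ∑ i, w i • v i = 0 ∧ IsBalanced hd w := by
  let pairSums : (Fin (2 * d + 2) → ℝ) →ₗ[ℝ] (Fin (d - 2) → ℝ) :=
    .pi fun k ↦ .proj ⟨2 * k + 6, by omega⟩ + .proj ⟨2 * k + 7, by omega⟩
  let Φ := (Fintype.linearCombination ℝ (1 : Fin (2 * d + 2) → ℝ)).prod
    ((Fintype.linearCombination ℝ v).prod pairSums)
  obtain ⟨w, hw, hΦ, hfst, hsnd⟩ := exists_ne_zero_map_eq_zero_median_map_eq_zero Φ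
    (by simp; omega) (.funLeft ℝ ℝ fun k : Fin 3 ↦ ⟨k, by omega⟩)
    (.funLeft ℝ ℝ fun k : Fin 3 ↦ ⟨k + 3, by omega⟩)
  obtain ⟨hsum, hsumv, hpairs⟩ : ∑ i, w i = 0 ∧ ∑ i, w i • v i = 0 ∧ pairSums w = 0 := by
    simpa [Φ, Fintype.linearCombination_apply] using hΦ
  exact ⟨w, hw, hsum, hsumv, hfst, hsnd, fun k ↦ congrFun hpairs k⟩

theorem exists_crossing_subsimplices_general {E : Type*} [NormedAddCommGroup E] [NormedSpace ℝ E]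
    [FiniteDimensional ℝ E] (hd : 2 ≤ d) (hE : Module.finrank ℝ E = d) (v : Fin (2 * d + 2) → E)
    (hgen : ∀ s : Finset (Fin (2 * d + 2)), #s = d + 1 →
      AffineIndependent ℝ (fun i : s ↦ v i)) :
    ∃ Va Vb : Finset (Fin (2 * d + 2)), Disjoint Va Vb ∧
      2 ≤ #Va ∧ #Va ≤ d ∧ 2 ≤ #Vb ∧ #Vb ≤ d ∧ d + 2 ≤ #Va + #Vb ∧
      (∀ i < d, #(Va.filter fun j ↦ partIdx j.val = i) ≤ 1) ∧
      (∀ i < d, #(Vb.filter fun j ↦ partIdx j.val = i) ≤ 1) ∧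
      (intrinsicInterior ℝ (convexHull ℝ (v '' Va)) ∩
        intrinsicInterior ℝ (convexHull ℝ (v '' Vb))).Nonempty := by
  obtain ⟨w, hw, hsum, hsumv, hbal⟩ := exists_isBalanced_of_finrank_le hd hE.le v
  let Va : Finset (Fin (2 * d + 2)) := {i | 0 < w i}
  let Vb : Finset (Fin (2 * d + 2)) := {i | w i < 0}
  have hVa : Set.InjOn (fun j : Fin (2 * d + 2) ↦ partIdx j) Va := by
    simpa [Va] using hbal.injOn_partIdx
  have hVb : Set.InjOn (fun j : Fin (2 * d + 2) ↦ partIdx j) Vb := by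
    simpa [Vb] using hbal.neg.injOn_partIdx
  have hcard : d + 1 < #Va + #Vb := by
    have hsupp := lt_card_filter_ne_zero_of_sum_smul_eq_zero (by simp; omega) hgen hw hsum hsumv
    rwa [card_eq_sum_ones, sum_filter_ne_zero_eq_add, ← card_eq_sum_ones, ← card_eq_sum_ones]
      at hsupp
  have hVa_le := card_le_of_injOn_partIdx hd hVa
  have hVb_le := card_le_of_injOn_partIdx hd hVb
  exact ⟨Va, Vb, disjoint_filter.2 fun _ _ ↦ lt_asymm, by omega, hVa_le, by omega, hVb_le, hcard,
    fun i _ ↦ card_filter_eq_le_one_of_injOn hVa i, fun i _ ↦ card_filter_eq_le_one_of_injOn hVb i,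
    intrinsicInterior_convexHull_inter_nonempty_of_sum_smul_eq_zero hw hsum hsumv⟩

end Parts

/-- Let `d ≥ 3` and let `v_1, …, v_{2d+2}` be points in general position
in `ℝ^d` partitioned into parts `L_1 = {v_1,v_2,v_3}`, `L_2 = {v_4,v_5,v_6}` and
`L_k = {v_{2k+1}, v_{2k+2}}` for `3 ≤ k ≤ d`. Then there exist disjoint subsets
`V_a, V_b` with `2 ≤ |V_a|, |V_b| ≤ d`, `|V_a| + |V_b| ≥ d + 2`, at most one vertex of
each part in each of `V_a` and `V_b`, whose convex hulls share a common point of their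
relative (intrinsic) interiors. -/
theorem exists_crossing_subsimplices (d : ℕ) (hd : 3 ≤ d)
    (v : Fin (2 * d + 2) → EuclideanSpace ℝ (Fin d))
    (hinj : Function.Injective v)
    (hgen : ∀ s : Finset (Fin (2 * d + 2)), s.card = d + 1 →
      AffineIndependent ℝ (fun i : s => v i.1)) :
    ∃ Va Vb : Finset (Fin (2 * d + 2)), Disjoint Va Vb ∧
      2 ≤ Va.card ∧ Va.card ≤ d ∧ 2 ≤ Vb.card ∧ Vb.card ≤ d ∧
      d + 2 ≤ Va.card + Vb.card ∧
      (∀ i < d, (Va.filter fun j => partIdx j.val = i).card ≤ 1) ∧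
      (∀ i < d, (Vb.filter fun j => partIdx j.val = i).card ≤ 1) ∧
      (intrinsicInterior ℝ (convexHull ℝ (v '' (Va : Set (Fin (2 * d + 2))))) ∩
        intrinsicInterior ℝ
          (convexHull ℝ (v '' (Vb : Set (Fin (2 * d + 2)))))).Nonempty :=
  exists_crossing_subsimplices_general (by omega) finrank_euclideanSpace_fin v hgen
end
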